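/- arXiv:0707.4160 — 3 statements merged into one kernel-verified Lean document; each statement's English description precedes it below -/
import Mathlib

section
/- Every simple finite vertex algebra is commutative: if $V$ is a vertex algebra that is a finitely generated $\mathbb{C}[T]$-module, has no ideals other than $0$ and $V$, then $a_{(n)}b = 0$ for all $a, b \in V$ and $n \geq 0$. -/
open scoped BigOperators

/-- A vertex algebra structure on a complex vector space `V`.
`P n a b` denotes the `n`-th product `a_{(n)} b`, `vac` is the vacuum `𝟙`,
and `D` is the infinitesimal translation operator `T`. -/
structure VertexAlgebra (V : Type*) [AddCommGroup V] [Module ℂ V] where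
  P : ℤ → V →ₗ[ℂ] V →ₗ[ℂ] V
  vac : V
  D : V →ₗ[ℂ] V
  field_ax : ∀ a b : V, ∃ N : ℕ, ∀ n : ℕ, N ≤ n → P n a b = 0
  vac_field : ∀ (n : ℤ) (a : V), P n vac a = if n = -1 then a else 0
  creation : ∀ a : V, P (-1) a vac = a
  creation_pos : ∀ (a : V) (n : ℤ), 0 ≤ n → P n a vac = 0
  D_vac : D vac = 0
  transl_inv : ∀ (n : ℤ) (a b : V), P n (D a) b = (-n : ℂ) • P (n - 1) a b
  D_deriv : ∀ (n : ℤ) (a b : V), D (P n a b) = P n (D a) b + P n a (D b)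
  skew : ∀ (n : ℤ) (a b : V),
    P n a b = ∑ᶠ j : ℕ, (((-1 : ℂ) ^ (n + j + 1)) / (j.factorial : ℂ)) • (D ^ j) (P (n + j) b a)
  borcherds : ∀ (m k : ℤ) (a b c : V),
    P m a (P k b c) - P k b (P m a c)
      = ∑ᶠ j : ℕ, ((Ring.choose m j : ℤ) : ℂ) • P (m + k - j) (P j a b) c

namespace VertexAlgebra

variable {V : Type*} [AddCommGroup V] [Module ℂ V] (W : VertexAlgebra V)

/-- An ideal of a vertex algebra: a `ℂ[T]`-submodule closed under all products with
arbitrary elements of `V`. -/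
def IsIdeal (I : Submodule ℂ V) : Prop :=
  (∀ x ∈ I, W.D x ∈ I) ∧ ∀ (a : V), ∀ b ∈ I, ∀ n : ℤ, W.P n a b ∈ I

/-- `A · B`: the span of all products `a_{(j)} b`, `a ∈ A`, `b ∈ B`, `j ∈ ℤ`. -/
def prodSpan (A B : Submodule ℂ V) : Submodule ℂ V :=
  Submodule.span ℂ {x | ∃ a ∈ A, ∃ b ∈ B, ∃ j : ℤ, x = W.P j a b}

/-- `[A, B]`: the span of all products `a_{(j)} b`, `a ∈ A`, `b ∈ B`, `j ≥ 0`. -/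
def posSpan (A B : Submodule ℂ V) : Submodule ℂ V :=
  Submodule.span ℂ {x | ∃ a ∈ A, ∃ b ∈ B, ∃ j : ℕ, x = W.P j a b}

/-- The sequence `I^1 = I`, `I^{n+1} = I^n · I^n` (indexed so that `nilSeq I n = I^{n+1}`). -/
def nilSeq (I : Submodule ℂ V) : ℕ → Submodule ℂ V
  | 0 => I
  | n + 1 => W.prodSpan (nilSeq I n) (nilSeq I n)

/-- A nil-ideal: an ideal whose sequence of iterated self-products vanishes. -/
def IsNilIdeal (I : Submodule ℂ V) : Prop :=
  W.IsIdeal I ∧ ∃ n : ℕ, W.nilSeq I n = ⊥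

/-- A vertex algebra is finite if it is a finitely generated `ℂ[T]`-module. -/
def IsFinite : Prop :=
  ∃ s : Finset V, ∀ v : V,
    v ∈ Submodule.span ℂ {x | ∃ g ∈ s, ∃ k : ℕ, x = (W.D ^ k) g}

/-- Abelian ideal. -/
def IsAbelianIdeal (I : Submodule ℂ V) : Prop :=
  W.IsIdeal I ∧ ∀ a ∈ I, ∀ b ∈ I, ∀ n : ℤ, W.P n a b = 0

end VertexAlgebra

/-!
Fix `c` and `a`, and suppose `c_{(l)} a = 0` for all `l > p`; put `u = c_{(p)} a`. Then every
`b_{(k)} u` lies in `[V, c]`. Indeed, for `N` large the series `(z - w)^N (c_{(l)} b)(z) a(w) 𝟙`,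
`l ≥ 0`, have no negative powers of `z`, so some coefficient `x` of `(z - w)^N b(z) a(w) 𝟙` has a
nonzero multiple of `b_{(k)} u` as its last product `c_{(M)} x`; by skew-symmetry the last
product is `± x_{(M)} c`, an element of `[V, c]`.

If `V` is finite, then `[V, c]` is finite-dimensional, because passing from `x` to `T x` creates no
new nonnegative products with `c`. Hence `u` belongs to the ideal of all vectors `v` for which
`V · v` is finite-dimensional. If this ideal is zero, every last product vanishes and `V` is
commutative. Otherwise it contains the vacuum, and `V = V · 𝟙` is finite-dimensional; then
`x_{(m)} b = 0` for all `x` as soon as `m` is large, and `a_{(n)} b` is a multiple of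
`(T^k a)_{(n + k)} b`.
-/

open Finset

section BinomialRing

variable {R : Type*} [Ring R] [BinomialRing R]

theorem fwdDiff_ringChoose (j : ℕ) :
    fwdDiff (1 : R) (fun x ↦ Ring.choose x (j + 1)) = fun x ↦ Ring.choose x j := by
  ext x
  rw [fwdDiff, Ring.choose_succ_succ, add_sub_cancel_right]

theorem fwdDiff_iter_ringChoose_of_lt {j N : ℕ} (hj : j < N) :
    (fwdDiff (1 : R))^[N] (fun x ↦ Ring.choose x j) = 0 := by
  induction N generalizing j with
  | zero => exact absurd hj j.not_lt_zero
  | succ N ih =>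
    rw [Function.iterate_succ_apply]
    cases j with
    | zero =>
      have hconst : fwdDiff (1 : R) (fun x ↦ Ring.choose x 0) = 0 := by
        ext x
        simp [fwdDiff]
      rw [hconst]
      exact Function.iterate_fixed (fwdDiff_const 1 0) N
    | succ j => rw [fwdDiff_ringChoose, ih (Nat.lt_of_succ_lt_succ hj)]

theorem sum_neg_one_pow_mul_choose_smul_ringChoose_sub {j N : ℕ} (hj : j < N) (r : R) :
    ∑ s ∈ range (N + 1), ((-1 : ℤ) ^ s * N.choose s) • Ring.choose (r - s) j = 0 := by
  have hdiff := congrFun (fwdDiff_iter_ringChoose_of_lt (R := R) hj) (r - N)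
  rw [fwdDiff_iter_eq_sum_shift, ← sum_range_reflect] at hdiff
  refine Eq.trans (sum_congr rfl fun s hs ↦ ?_) hdiff
  have hsN : s ≤ N := mem_range_succ_iff.mp hs
  rw [Nat.add_sub_cancel, Nat.sub_sub_self hsN, Nat.choose_symm hsN]
  simp [Nat.cast_sub hsN]

end BinomialRing

namespace VertexAlgebra

variable {V : Type*} [AddCommGroup V] [Module ℂ V] (W : VertexAlgebra V)

theorem posSpan_top_span_singleton_le {c : V} {F : Submodule ℂ V} :
    W.posSpan ⊤ (ℂ ∙ c) ≤ F ↔ ∀ (x : V) (n : ℕ), W.P n x c ∈ F := by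
  rw [posSpan, Submodule.span_le]
  constructor
  · exact fun h x n ↦ h ⟨x, trivial, c, Submodule.mem_span_singleton_self c, n, rfl⟩
  · rintro h _ ⟨x, -, y, hy, n, rfl⟩
    obtain ⟨t, rfl⟩ := Submodule.mem_span_singleton.mp hy
    rw [map_smul]
    exact F.smul_mem t (h x n)

theorem prodSpan_top_span_singleton_le {u : V} {F : Submodule ℂ V} :
    W.prodSpan ⊤ (ℂ ∙ u) ≤ F ↔ ∀ (b : V) (k : ℤ), W.P k b u ∈ F := by
  rw [prodSpan, Submodule.span_le]
  constructor
  · exact fun h b k ↦ h ⟨b, trivial, u, Submodule.mem_span_singleton_self u, k, rfl⟩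
  · rintro h _ ⟨b, -, y, hy, k, rfl⟩
    obtain ⟨t, rfl⟩ := Submodule.mem_span_singleton.mp hy
    rw [map_smul]
    exact F.smul_mem t (h b k)

theorem P_mem_posSpan (x c : V) (n : ℕ) : W.P n x c ∈ W.posSpan ⊤ (ℂ ∙ c) :=
  W.posSpan_top_span_singleton_le.mp le_rfl x n

theorem P_mem_prodSpan (b u : V) (k : ℤ) : W.P k b u ∈ W.prodSpan ⊤ (ℂ ∙ u) :=
  W.prodSpan_top_span_singleton_le.mp le_rfl b k

/-! ### Commutators and locality -/

theorem P_P_comm {a b : V} {N : ℕ} (hab : ∀ n : ℕ, N ≤ n → W.P n a b = 0) (m k : ℤ) (c : V) :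
    W.P m a (W.P k b c) = W.P k b (W.P m a c)
      + ∑ j ∈ range N, Ring.choose m j • W.P (m + k - j) (W.P j a b) c := by
  rw [← sub_eq_iff_eq_add', W.borcherds]
  simp only [Int.cast_smul_eq_zsmul]
  refine finsum_eq_sum_of_support_subset _ fun j hj ↦ ?_
  by_contra hjN
  exact hj (by simp [hab j (by simpa using hjN)])

/-- The coefficient of `z ^ (N - m - 1) * w ^ (-k - 1)` in `(z - w) ^ N a(z) b(w) c`, where
`a(z) = ∑ a_{(n)} z ^ (-n - 1)`. For `N` large it does not depend on the order of
`a(z)` and `b(w)`. -/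
def localProduct (N : ℕ) (m k : ℤ) (a b c : V) : V :=
  ∑ s ∈ range (N + 1), ((-1 : ℤ) ^ s * N.choose s) • W.P (m - s) a (W.P (k + s) b c)

theorem localProduct_eq_sum_swap {a b : V} {N : ℕ} (hab : ∀ n : ℕ, N ≤ n → W.P n a b = 0)
    (m k : ℤ) (c : V) :
    W.localProduct N m k a b c =
      ∑ s ∈ range (N + 1), ((-1 : ℤ) ^ s * N.choose s) • W.P (k + s) b (W.P (m - s) a c) := by
  simp_rw [localProduct, W.P_P_comm hab, smul_add, sum_add_distrib]
  rw [add_eq_left]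
  simp_rw [smul_sum]
  rw [sum_comm]
  refine sum_eq_zero fun j hj ↦ ?_
  simp_rw [sub_add_add_cancel, ← smul_assoc]
  rw [← sum_smul, sum_neg_one_pow_mul_choose_smul_ringChoose_sub (mem_range.mp hj) m, zero_smul]

theorem localProduct_vac_eq_zero {a b : V} {N : ℕ} (hab : ∀ n : ℕ, N ≤ n → W.P n a b = 0)
    {m : ℤ} (hm : N ≤ m) (k : ℤ) : W.localProduct N m k a b W.vac = 0 := by
  rw [W.localProduct_eq_sum_swap hab]
  refine sum_eq_zero fun s hs ↦ ?_
  have hsN : s ≤ N := mem_range_succ_iff.mp hs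
  rw [W.creation_pos a (m - s) (by lia), map_zero, smul_zero]

theorem P_localProduct {c b : V} {B : ℕ} (hcb : ∀ n : ℕ, B ≤ n → W.P n c b = 0)
    (N : ℕ) (m r k : ℤ) (a v : V) :
    W.P m c (W.localProduct N r k b a v) =
      ∑ s ∈ range (N + 1), ((-1 : ℤ) ^ s * N.choose s) •
          W.P (r - s) b (W.P m c (W.P (k + s) a v))
        + ∑ l ∈ range B, Ring.choose m l • W.localProduct N (m + r - l) k (W.P l c b) a v := by
  simp_rw [localProduct, map_sum, map_zsmul, W.P_P_comm hcb, smul_add, sum_add_distrib, smul_sum]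
  rw [sum_comm (s := range B)]
  simp_rw [smul_comm (Ring.choose m _), add_sub_assoc, sub_right_comm]

/-! ### Leading products -/

theorem P_P_vac_eq_zero {c a : V} {B : ℕ} (hca : ∀ l : ℕ, B ≤ l → W.P l c a = 0) {m q : ℤ}
    (hm : 0 ≤ m) (hmq : B ≤ m + q + 1) : W.P m c (W.P q a W.vac) = 0 := by
  rw [W.P_P_comm hca, W.creation_pos c m hm, map_zero, zero_add]
  refine sum_eq_zero fun l hl ↦ ?_
  have hlB : l < B := mem_range.mp hl
  rw [W.creation_pos _ _ (by lia), smul_zero]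

theorem P_P_vac_eq_choose_smul {c a : V} {p : ℕ} (hca : ∀ l : ℕ, p < l → W.P l c a = 0) {m q : ℤ}
    (hm : 0 ≤ m) (hmq : m + q + 1 = p) :
    W.P m c (W.P q a W.vac) = Ring.choose m p • W.P p c a := by
  rw [W.P_P_comm (N := p + 1) hca, W.creation_pos c m hm, map_zero, zero_add, sum_range_succ,
    show m + q - p = -1 by lia, W.creation, add_eq_right]
  refine sum_eq_zero fun l hl ↦ ?_
  have hlp : l < p := mem_range.mp hl
  rw [W.creation_pos _ _ (by lia), smul_zero]

theorem P_eq_zero_swap {a b : V} {p : ℕ} (hab : ∀ m : ℕ, p ≤ m → W.P m a b = 0) (m : ℕ)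
    (hm : p ≤ m) : W.P m b a = 0 := by
  rw [W.skew]
  refine finsum_eq_zero_of_forall_eq_zero fun j ↦ ?_
  rw [← Nat.cast_add, hab (m + j) (by lia), map_zero, smul_zero]

theorem P_eq_neg_one_pow_smul_swap {a b : V} {p : ℕ} (hab : ∀ m : ℕ, p < m → W.P m a b = 0) :
    W.P p a b = (-1 : ℂ) ^ (p + 1) • W.P p b a := by
  have hba := W.P_eq_zero_swap (p := p + 1) hab
  rw [W.skew, finsum_eq_single _ 0]
  · rw [Nat.cast_zero, add_zero, ← Nat.cast_succ, zpow_natCast]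
    simp
  · intro j hj
    rw [← Nat.cast_add, hba (p + j) (by lia), map_zero, smul_zero]

theorem P_mem_posSpan_of_forall_lt {c x : V} {p : ℕ} (hcx : ∀ m : ℕ, p < m → W.P m c x = 0) :
    W.P p c x ∈ W.posSpan ⊤ (ℂ ∙ c) := by
  rw [W.P_eq_neg_one_pow_smul_swap hcx]
  exact Submodule.smul_mem _ _ (W.P_mem_posSpan x c p)

theorem exists_P_localProduct_vac_eq_sum (a b c : V) (k : ℤ) :
    ∃ N n : ℕ, ∀ (m q : ℤ), n ≤ m →
      W.P m c (W.localProduct N k q b a W.vac) =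
        ∑ s ∈ range (N + 1), ((-1 : ℤ) ^ s * N.choose s) •
          W.P (k - s) b (W.P m c (W.P (q + s) a W.vac)) := by
  obtain ⟨B, hcb⟩ := W.field_ax c b
  choose L hL using fun l : ℕ ↦ W.field_ax (W.P l c b) a
  let N := (range B).sup L
  refine ⟨N, N + B + k.natAbs, fun m q hm ↦ ?_⟩
  rw [W.P_localProduct hcb, add_eq_left]
  refine sum_eq_zero fun l hl ↦ ?_
  have hlB : l < B := mem_range.mp hl
  have hLN : L l ≤ N := le_sup hl
  rw [W.localProduct_vac_eq_zero (fun n hn ↦ hL l n (hLN.trans hn)) (by lia), smul_zero]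

theorem exists_leading_eq_smul {c a : V} {p : ℕ} (hca : ∀ l : ℕ, p < l → W.P l c a = 0)
    (b : V) (k : ℤ) :
    ∃ (x : V) (M : ℕ), (∀ m : ℕ, M < m → W.P m c x = 0) ∧
      ∃ t : ℤ, t ≠ 0 ∧ W.P M c x = t • W.P k b (W.P p c a) := by
  obtain ⟨N, n, hx⟩ := W.exists_P_localProduct_vac_eq_sum a b c k
  refine ⟨W.localProduct N k (-n - 1) b a W.vac, n + p, fun m hm ↦ ?_,
    Ring.choose ((n + p : ℕ) : ℤ) p, ?_, ?_⟩
  · rw [hx m _ (by lia)]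
    refine sum_eq_zero fun s _ ↦ ?_
    rw [W.P_P_vac_eq_zero (B := p + 1) hca (by lia) (by lia), map_zero, smul_zero]
  · rw [Ring.choose_natCast]
    exact_mod_cast (Nat.choose_pos (Nat.le_add_left p n)).ne'
  · rw [hx _ _ (by lia), sum_eq_single_of_mem 0 (by simp)]
    · rw [W.P_P_vac_eq_choose_smul hca (by lia) (by lia)]
      simp
    · intro s _ hs
      rw [W.P_P_vac_eq_zero (B := p + 1) hca (by lia) (by lia), map_zero, smul_zero]

theorem prodSpan_leading_le_posSpan {c a : V} {p : ℕ} (hca : ∀ l : ℕ, p < l → W.P l c a = 0) :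
    W.prodSpan ⊤ (ℂ ∙ W.P p c a) ≤ W.posSpan ⊤ (ℂ ∙ c) := by
  refine W.prodSpan_top_span_singleton_le.mpr fun b k ↦ ?_
  obtain ⟨x, M, hcx, t, ht, hMx⟩ := W.exists_leading_eq_smul hca b k
  have hmem := W.P_mem_posSpan_of_forall_lt hcx
  rw [hMx, ← Int.cast_smul_eq_zsmul ℂ] at hmem
  exact ((W.posSpan ⊤ (ℂ ∙ c)).smul_mem_iff (Int.cast_ne_zero.mpr ht)).mp hmem

theorem P_eq_zero_of_forall_leading_eq_zero {c a : V}
    (h : ∀ p : ℕ, (∀ l : ℕ, p < l → W.P l c a = 0) → W.P p c a = 0) (n : ℕ) :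
    W.P n c a = 0 := by
  have descend : ∀ N : ℕ, (∀ l : ℕ, N ≤ l → W.P l c a = 0) → W.P n c a = 0 := by
    intro N hN
    induction N with
    | zero => exact hN n n.zero_le
    | succ N ih =>
      refine ih fun l hl ↦ ?_
      rcases hl.eq_or_lt with rfl | hlt
      · exact h N hN
      · exact hN l hlt
  obtain ⟨N, hN⟩ := W.field_ax c a
  exact descend N hN

/-! ### The ideal of vectors generating a finite-dimensional space -/

/-- The vectors `u` for which `V · u` is finite-dimensional; this is the ideal that simplicity
forces to be `0` or `V`. Here `V · u` is encoded as `W.prodSpan ⊤ (ℂ ∙ u)`. -/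
def finiteDimensionalVectors : Submodule ℂ V where
  carrier := {u | FiniteDimensional ℂ (W.prodSpan ⊤ (ℂ ∙ u))}
  zero_mem' := by
    have hle : W.prodSpan ⊤ (ℂ ∙ (0 : V)) ≤ ⊥ :=
      W.prodSpan_top_span_singleton_le.mpr fun b k ↦ by simp
    exact Submodule.finiteDimensional_of_le hle
  add_mem' {u v} hu hv := by
    rw [Set.mem_ofPred_eq] at hu hv
    have hle : W.prodSpan ⊤ (ℂ ∙ (u + v)) ≤ W.prodSpan ⊤ (ℂ ∙ u) ⊔ W.prodSpan ⊤ (ℂ ∙ v) := by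
      refine W.prodSpan_top_span_singleton_le.mpr fun b k ↦ ?_
      rw [map_add]
      exact Submodule.add_mem_sup (W.P_mem_prodSpan b u k) (W.P_mem_prodSpan b v k)
    exact Submodule.finiteDimensional_of_le hle
  smul_mem' t u hu := by
    rw [Set.mem_ofPred_eq] at hu
    have hle : W.prodSpan ⊤ (ℂ ∙ (t • u)) ≤ W.prodSpan ⊤ (ℂ ∙ u) := by
      refine W.prodSpan_top_span_singleton_le.mpr fun b k ↦ ?_
      rw [map_smul]
      exact Submodule.smul_mem _ t (W.P_mem_prodSpan b u k)
    exact Submodule.finiteDimensional_of_le hle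

theorem mem_finiteDimensionalVectors {u : V} :
    u ∈ W.finiteDimensionalVectors ↔ FiniteDimensional ℂ (W.prodSpan ⊤ (ℂ ∙ u)) :=
  Iff.rfl

theorem prodSpan_D_le (u : V) :
    W.prodSpan ⊤ (ℂ ∙ W.D u) ≤ (W.prodSpan ⊤ (ℂ ∙ u)).map W.D ⊔ W.prodSpan ⊤ (ℂ ∙ u) := by
  refine W.prodSpan_top_span_singleton_le.mpr fun b k ↦ ?_
  rw [← sub_eq_of_eq_add' (W.D_deriv k b u), W.transl_inv]
  exact Submodule.sub_mem_sup (Submodule.mem_map_of_mem (W.P_mem_prodSpan b u k))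
    (Submodule.smul_mem _ _ (W.P_mem_prodSpan b u (k - 1)))

theorem prodSpan_P_le (a u : V) (n : ℤ) :
    W.prodSpan ⊤ (ℂ ∙ W.P n a u) ≤
      (W.prodSpan ⊤ (ℂ ∙ u)).map (W.P n a) ⊔ W.prodSpan ⊤ (ℂ ∙ u) := by
  refine W.prodSpan_top_span_singleton_le.mpr fun b k ↦ ?_
  obtain ⟨N, hba⟩ := W.field_ax b a
  rw [W.P_P_comm hba]
  exact Submodule.add_mem_sup (Submodule.mem_map_of_mem (W.P_mem_prodSpan b u k))
    (Submodule.sum_mem _ fun j _ ↦ zsmul_mem (W.P_mem_prodSpan _ u _) _)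

theorem isIdeal_finiteDimensionalVectors : W.IsIdeal W.finiteDimensionalVectors := by
  simp only [IsIdeal, mem_finiteDimensionalVectors]
  exact ⟨fun u _ ↦ Submodule.finiteDimensional_of_le (W.prodSpan_D_le u),
    fun a u _ n ↦ Submodule.finiteDimensional_of_le (W.prodSpan_P_le a u n)⟩

theorem finiteDimensional_of_vac_mem (h : W.vac ∈ W.finiteDimensionalVectors) :
    FiniteDimensional ℂ V := by
  have htop : W.prodSpan ⊤ (ℂ ∙ W.vac) = ⊤ :=
    Submodule.eq_top_iff'.mpr fun a ↦ W.creation a ▸ W.P_mem_prodSpan a W.vac (-1)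
  rw [mem_finiteDimensionalVectors, htop] at h
  exact Submodule.topEquiv.finiteDimensional

/-! ### Finiteness conditions -/

theorem P_D_pow_mem {g c : V} {F : Submodule ℂ V} (hF : ∀ n : ℕ, W.P n g c ∈ F) (k n : ℕ) :
    W.P n ((W.D ^ k) g) c ∈ F := by
  induction k generalizing n with
  | zero => exact hF n
  | succ k ih =>
    rw [pow_succ', Module.End.mul_apply, W.transl_inv]
    cases n with
    | zero => simp
    | succ n =>
      rw [Nat.cast_succ, add_sub_cancel_right]
      exact F.smul_mem _ (ih n)

theorem finite_range_P_natCast (a b : V) : (Set.range fun n : ℕ ↦ W.P n a b).Finite := by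
  obtain ⟨N, hN⟩ := W.field_ax a b
  refine (((range N).finite_toSet.image fun n : ℕ ↦ W.P n a b).insert 0).subset ?_
  rintro _ ⟨n, rfl⟩
  rcases lt_or_ge n N with hn | hn
  · exact Set.mem_insert_of_mem _ ⟨n, by simpa using hn, rfl⟩
  · exact Set.mem_insert_iff.mpr (Or.inl (hN n hn))

theorem IsFinite.finiteDimensional_posSpan {W : VertexAlgebra V} (hfin : W.IsFinite) (c : V) :
    FiniteDimensional ℂ (W.posSpan ⊤ (ℂ ∙ c)) := by
  obtain ⟨s, hs⟩ := hfin
  let S : Set V := ⋃ g ∈ s, Set.range fun n : ℕ ↦ W.P n g c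
  have : FiniteDimensional ℂ (Submodule.span ℂ S) :=
    .span_of_finite ℂ (s.finite_toSet.biUnion fun g _ ↦ W.finite_range_P_natCast g c)
  refine Submodule.finiteDimensional_of_le (S₂ := Submodule.span ℂ S)
    (W.posSpan_top_span_singleton_le.mpr fun x n ↦ ?_)
  induction hs x using Submodule.span_induction with
  | mem x hx =>
    obtain ⟨g, hg, k, rfl⟩ := hx
    have hgS (l : ℕ) : W.P l g c ∈ S := Set.mem_biUnion hg (Set.mem_range_self l)
    exact W.P_D_pow_mem (fun l ↦ Submodule.subset_span (hgS l)) k n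
  | zero => simp
  | add x y _ _ hx hy => simpa using Submodule.add_mem _ hx hy
  | smul t x _ hx => simpa using Submodule.smul_mem _ t hx

theorem exists_forall_P_eq_zero [FiniteDimensional ℂ V] (b : V) :
    ∃ N : ℕ, ∀ n : ℕ, N ≤ n → ∀ x : V, W.P n x b = 0 := by
  let e := Module.finBasis ℂ V
  choose L hL using fun i ↦ W.field_ax (e i) b
  refine ⟨univ.sup L, fun n hn ↦ ?_⟩
  have hflip : (W.P n).flip b = 0 :=
    e.ext fun i ↦ hL i n ((le_sup (mem_univ i)).trans hn)
  exact LinearMap.congr_fun hflip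

theorem P_eq_zero_of_P_D_pow_eq_zero {a b : V} {n : ℕ} (k : ℕ)
    (h : W.P (n + k : ℕ) ((W.D ^ k) a) b = 0) : W.P n a b = 0 := by
  induction k with
  | zero => exact h
  | succ k ih =>
    rw [pow_succ', Module.End.mul_apply, W.transl_inv, ← add_assoc, Nat.cast_succ,
      add_sub_cancel_right] at h
    refine ih ((smul_eq_zero.mp h).resolve_left ?_)
    exact neg_ne_zero.mpr (by exact_mod_cast (n + k).succ_ne_zero)

theorem P_eq_zero_of_finiteDimensional [FiniteDimensional ℂ V] (a b : V) (n : ℕ) :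
    W.P n a b = 0 := by
  obtain ⟨N, hN⟩ := W.exists_forall_P_eq_zero b
  exact W.P_eq_zero_of_P_D_pow_eq_zero N (hN (n + N) (Nat.le_add_left N n) _)

end VertexAlgebra

open VertexAlgebra in
theorem simple_finite_is_commutative_general {V : Type*} [AddCommGroup V] [Module ℂ V]
    (W : VertexAlgebra V) (hfin : ∀ c : V, FiniteDimensional ℂ (W.posSpan ⊤ (ℂ ∙ c)))
    (hsimple : ∀ I : Submodule ℂ V, W.IsIdeal I → I = ⊥ ∨ I = ⊤) :
    ∀ (a b : V) (n : ℕ), W.P n a b = 0 := by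
  have leading_mem {c a : V} {p : ℕ} (hca : ∀ l : ℕ, p < l → W.P l c a = 0) :
      W.P p c a ∈ W.finiteDimensionalVectors :=
    have := hfin c
    W.mem_finiteDimensionalVectors.mpr
      (Submodule.finiteDimensional_of_le (W.prodSpan_leading_le_posSpan hca))
  rcases hsimple _ W.isIdeal_finiteDimensionalVectors with hbot | htop
  · intro c a
    refine W.P_eq_zero_of_forall_leading_eq_zero fun p hca ↦ ?_
    rw [← Submodule.mem_bot ℂ, ← hbot]
    exact leading_mem hca
  · have := W.finiteDimensional_of_vac_mem (htop ▸ Submodule.mem_top)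
    exact W.P_eq_zero_of_finiteDimensional

open VertexAlgebra in
/-- every simple finite vertex algebra is commutative. -/
theorem simple_finite_is_commutative {V : Type*} [AddCommGroup V] [Module ℂ V]
    (W : VertexAlgebra V) (hfin : W.IsFinite)
    (hsimple : ∀ I : Submodule ℂ V, W.IsIdeal I → I = ⊥ ∨ I = ⊤) :
    ∀ (a b : V) (n : ℕ), W.P n a b = 0 := by
  exact simple_finite_is_commutative_general W hfin.finiteDimensional_posSpan hsimple
end

section
/- Let $V$ be a vertex algebra, $S$ a Lie conformal subalgebra of $V$, and $\phi, \psi$ two weights for the adjoint action of $S$ on $V$. Then $V^\phi \cdot V^\psi \subset V^{\phi+\psi}$, i.e., all products $v_{(k)}w$ with $v \in V^\phi$, $w \in V^\psi$, $k \in \mathbb{Z}$ lie in the generalized weight space $V^{\phi+\psi}$. -/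
open scoped BigOperators

namespace VertexAlgebra

variable {V : Type*} [AddCommGroup V] [Module ℂ V]

/-- A Lie conformal subalgebra of (the Lie conformal algebra underlying) a vertex algebra:
a `ℂ[T]`-submodule closed under all non-negative products. -/
def IsConfSubalgebra (W : VertexAlgebra V) (S : Submodule ℂ V) : Prop :=
  (∀ x ∈ S, W.D x ∈ S) ∧ ∀ a ∈ S, ∀ b ∈ S, ∀ n : ℕ, W.P n a b ∈ S

/-- `ψ` (given by its coefficients `ψ s h` of `λ^h/h!`) is a weight for the adjoint action
of `S` on `V`: there is a non-zero weight vector. -/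
def IsWeight (W : VertexAlgebra V) (S : Submodule ℂ V) (ψ : V → ℕ → ℂ) : Prop :=
  ∃ v : V, v ≠ 0 ∧ ∀ s ∈ S, ∀ h : ℕ, W.P h s v = ψ s h • v

/-- The ascending chain `V^ψ_0 = 0`, `V^ψ_{i+1} = {v | s_λ v - ψ_s(λ) v ∈ V^ψ_i[λ]}`. -/
def genWtSeq (W : VertexAlgebra V) (S : Submodule ℂ V) (ψ : V → ℕ → ℂ) : ℕ → Set V
  | 0 => {0}
  | i + 1 => {v | ∀ s ∈ S, ∀ h : ℕ, W.P h s v - ψ s h • v ∈ genWtSeq W S ψ i}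

/-- The generalized weight space `V^ψ = ⋃ᵢ V^ψ_i`. -/
def genWt (W : VertexAlgebra V) (S : Submodule ℂ V) (ψ : V → ℕ → ℂ) : Set V :=
  {v | ∃ i : ℕ, v ∈ genWtSeq W S ψ i}

end VertexAlgebra

/-!
The obstacle is uniformity: as `s` ranges over `S`, the products `(s_(j) v - φ_s,j v)_(k) w` need
not vanish beyond a common `k`, so one cannot induct on single products. Instead consider the whole
generating series `f(z) = ∑ₖ v_(k) w z^(-k-1)`. By the commutator formula it is a generalized
eigenvector of `s_λ` with eigenvalue `ψ_s(λ) + e^(λz) φ_s(λ)`, and subtracting this eigenvalue from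
`s_λ` does not worsen the truncation of `f`, whatever `s` is. Finally `e^(λz) = 1 + λz + ⋯`, where
multiplication by `z` raises the index `k` and so is nilpotent on each coefficient of a truncated
series.
-/

section IteratedCommonKernel

variable {R M ι : Type*} [Semiring R] [AddCommMonoid M] [Module R M]

/-- The vectors killed by every product of `n` operators of the family `T`, as an ascending chain in
`n`. Both the chain `genWtSeq` and its analogue for series of vectors have this form. -/
def iteratedCommonKernel (T : ι → Module.End R M) : ℕ → Submodule R M
  | 0 => ⊥
  | n + 1 => ⨅ i, (iteratedCommonKernel T n).comap (T i)

variable {T : ι → Module.End R M} {n : ℕ} {x : M}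

theorem mem_iteratedCommonKernel_zero : x ∈ iteratedCommonKernel T 0 ↔ x = 0 :=
  Submodule.mem_bot R

theorem mem_iteratedCommonKernel_succ :
    x ∈ iteratedCommonKernel T (n + 1) ↔ ∀ i, T i x ∈ iteratedCommonKernel T n := by
  simp only [iteratedCommonKernel, Submodule.mem_iInf, Submodule.mem_comap]

theorem apply_mem_iteratedCommonKernel_of_commute {A : Module.End R M}
    (hA : ∀ i, Commute (T i) A) (hx : x ∈ iteratedCommonKernel T n) :
    A x ∈ iteratedCommonKernel T n := by
  induction n generalizing x with
  | zero => rw [mem_iteratedCommonKernel_zero.1 hx, map_zero]; exact zero_mem _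
  | succ n ih =>
    rw [mem_iteratedCommonKernel_succ] at hx ⊢
    intro i
    have hcomm : T i (A x) = A (T i x) := LinearMap.congr_fun (hA i) x
    exact hcomm ▸ ih (hx i)

end IteratedCommonKernel

namespace VertexAlgebra

variable {V : Type*} [AddCommGroup V] [Module ℂ V]

section AdjointDefect

variable (W : VertexAlgebra V)

/-- The coefficient of `λ^h/h!` in `s_λ - ψ_s(λ)`, as an operator on `V`. -/
def adjointDefect (ψ : V → ℕ → ℂ) (s : V) (h : ℕ) : Module.End ℂ V :=
  W.P h s - ψ s h • 1

theorem adjointDefect_apply (ψ : V → ℕ → ℂ) (s : V) (h : ℕ) (v : V) :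
    W.adjointDefect ψ s h v = W.P h s v - ψ s h • v :=
  rfl

theorem genWtSeq_eq_iteratedCommonKernel (S : Submodule ℂ V) (ψ : V → ℕ → ℂ) (n : ℕ) :
    W.genWtSeq S ψ n =
      iteratedCommonKernel (fun p : S × ℕ => W.adjointDefect ψ p.1 p.2) n := by
  induction n with
  | zero => rfl
  | succ n ih =>
    ext v
    simp only [genWtSeq, ih, SetLike.mem_coe, mem_iteratedCommonKernel_succ, Prod.forall,
      Subtype.forall, Set.mem_ofPred_eq, adjointDefect_apply]

end AdjointDefect

/-- Translation of the index of a series `f`. If `f k` is read as the coefficient of `z^(-k-1)`,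
this is multiplication by `z^d`. -/
def shift (d : ℤ) : Module.End ℂ (ℤ → V) :=
  LinearMap.funLeft ℂ V (· + d)

theorem shift_apply (d : ℤ) (f : ℤ → V) (k : ℤ) : shift d f k = f (k + d) :=
  rfl

theorem shift_commute_shift (d e : ℤ) :
    Commute (shift d : Module.End ℂ (ℤ → V)) (shift e) :=
  LinearMap.ext fun f => funext fun k => congrArg f (add_right_comm k d e)

theorem compLeft_commute_shift (A : Module.End ℂ V) (d : ℤ) :
    Commute (A.compLeft ℤ) (shift d) :=
  rfl

section SeriesDefect

variable (W : VertexAlgebra V) (S : Submodule ℂ V) (φ ψ : V → ℕ → ℂ)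

/-- The coefficient of `λ^m/m!` in `s_λ - ψ_s(λ) - e^(λz) φ_s(λ)`, as an operator on series. -/
def seriesDefect (s : V) (m : ℕ) : Module.End ℂ (ℤ → V) :=
  (W.adjointDefect ψ s m).compLeft ℤ -
    ∑ j ∈ Finset.range (m + 1), ((m.choose j : ℂ) * φ s j) • shift ((m : ℤ) - j)

theorem seriesDefect_apply (s : V) (m : ℕ) (f : ℤ → V) (k : ℤ) :
    W.seriesDefect φ ψ s m f k = W.adjointDefect ψ s m (f k) -
      ∑ j ∈ Finset.range (m + 1), ((m.choose j : ℂ) * φ s j) • f (k + ((m : ℤ) - j)) := by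
  simp only [seriesDefect, LinearMap.sub_apply, LinearMap.sum_apply, LinearMap.smul_apply,
    Pi.sub_apply, Finset.sum_apply, Pi.smul_apply, shift_apply, LinearMap.compLeft_apply,
    Function.comp_apply]

theorem seriesDefect_commute_shift (s : V) (m : ℕ) (d : ℤ) :
    Commute (W.seriesDefect φ ψ s m) (shift d) :=
  (compLeft_commute_shift _ d).sub_left <|
    Commute.sum_left _ _ _ fun _ _ => (shift_commute_shift _ d).smul_left _

theorem adjointDefect_add_apply_eq (s : V) (m : ℕ) (f : ℤ → V) (k : ℤ) :
    W.adjointDefect (φ + ψ) s m (f k) = W.seriesDefect φ ψ s m f k +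
      ∑ j ∈ Finset.range m, ((m.choose j : ℂ) * φ s j) • f (k + ((m : ℤ) - j)) := by
  simp only [seriesDefect_apply, adjointDefect_apply, Finset.sum_range_succ, Nat.choose_self,
    Nat.cast_one, one_mul, sub_self, add_zero, Pi.add_apply, add_smul]
  abel

/-- The series analogue of the chain `genWtSeq`, for the eigenvalue `ψ_s(λ) + e^(λz) φ_s(λ)`. -/
def seriesGenWtSeq (n : ℕ) : Submodule ℂ (ℤ → V) :=
  iteratedCommonKernel (fun p : S × ℕ => W.seriesDefect φ ψ p.1 p.2) n

variable {W S φ ψ} {f : ℤ → V} {N : ℤ} {n : ℕ}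

theorem seriesDefect_apply_eq_zero_of_le (hf : ∀ l, N ≤ l → f l = 0) (s : V) (m : ℕ)
    {l : ℤ} (hl : N ≤ l) : W.seriesDefect φ ψ s m f l = 0 := by
  rw [seriesDefect_apply, hf l hl, map_zero, zero_sub, neg_eq_zero]
  refine Finset.sum_eq_zero fun j hj => ?_
  have hjm : j < m + 1 := Finset.mem_range.1 hj
  rw [hf _ (by omega), smul_zero]

theorem mem_seriesGenWtSeq_succ :
    f ∈ W.seriesGenWtSeq S φ ψ (n + 1) ↔
      ∀ s ∈ S, ∀ m, W.seriesDefect φ ψ s m f ∈ W.seriesGenWtSeq S φ ψ n := by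
  simp only [seriesGenWtSeq, mem_iteratedCommonKernel_succ, Prod.forall, Subtype.forall]

theorem shift_mem_seriesGenWtSeq (d : ℤ) (hf : f ∈ W.seriesGenWtSeq S φ ψ n) :
    shift d f ∈ W.seriesGenWtSeq S φ ψ n :=
  apply_mem_iteratedCommonKernel_of_commute (fun _ => W.seriesDefect_commute_shift φ ψ _ _ d) hf

-- Each step of the chain lowers `n` or raises `k`, so `n + N - k` bounds the number of steps.
theorem apply_mem_genWtSeq_add (hf : f ∈ W.seriesGenWtSeq S φ ψ n)
    (hN : ∀ l, N ≤ l → f l = 0) {k : ℤ} {M : ℕ} (hM : n + N - k ≤ M) :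
    f k ∈ W.genWtSeq S (φ + ψ) M := by
  rw [genWtSeq_eq_iteratedCommonKernel, SetLike.mem_coe]
  induction M generalizing n f k with
  | zero =>
    rw [hN k (by omega)]
    exact zero_mem _
  | succ M ih =>
    cases n with
    | zero =>
      rw [mem_iteratedCommonKernel_zero.1 hf]
      exact zero_mem _
    | succ n =>
      rw [mem_iteratedCommonKernel_succ]
      rintro ⟨⟨s, hs⟩, m⟩
      rw [adjointDefect_add_apply_eq]
      have hdefect : W.seriesDefect φ ψ s m f ∈ W.seriesGenWtSeq S φ ψ n :=
        mem_seriesGenWtSeq_succ.1 hf s hs m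
      refine add_mem (ih hdefect (fun _ => seriesDefect_apply_eq_zero_of_le hN s m) (by omega)) ?_
      refine sum_mem fun j hj => Submodule.smul_mem _ _ (ih hf hN ?_)
      have hjm : j < m := Finset.mem_range.1 hj
      omega

end SeriesDefect

section Products

variable (W : VertexAlgebra V)

/-- The series `k ↦ v_(k) w` of all products of `v` and `w`, bilinear in `v` and `w`. -/
def productSeries : V →ₗ[ℂ] V →ₗ[ℂ] ℤ → V :=
  LinearMap.mk₂ ℂ (fun v w k => W.P k v w)
    (fun _ _ _ => funext fun _ => LinearMap.map_add₂ _ _ _ _)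
    (fun _ _ _ => funext fun _ => LinearMap.map_smul₂ _ _ _ _)
    (fun _ _ _ => funext fun _ => map_add _ _ _)
    (fun _ _ _ => funext fun _ => map_smul _ _ _)

theorem productSeries_apply (v w : V) (k : ℤ) : W.productSeries v w k = W.P k v w :=
  rfl

theorem exists_productSeries_eq_zero_of_le (v w : V) :
    ∃ N : ℤ, ∀ l, N ≤ l → W.productSeries v w l = 0 := by
  obtain ⟨N, hN⟩ := W.field_ax v w
  refine ⟨N, fun l hl => ?_⟩
  lift l to ℕ using (Int.natCast_nonneg N).trans hl
  exact hN l (Nat.cast_le.1 hl)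

theorem P_natCast_apply_P (m : ℕ) (k : ℤ) (a b c : V) :
    W.P m a (W.P k b c) = W.P k b (W.P m a c) +
      ∑ j ∈ Finset.range (m + 1), (m.choose j : ℂ) • W.P (k + ((m : ℤ) - j)) (W.P j a b) c := by
  rw [← sub_eq_iff_eq_add', W.borcherds,
    finsum_eq_sum_of_support_subset (s := Finset.range (m + 1))]
  · refine Finset.sum_congr rfl fun j _ => ?_
    rw [Ring.choose_natCast, Int.cast_natCast, add_sub_left_comm, ← add_sub_assoc]
  · refine Function.support_subset_iff'.2 fun j hj => ?_
    have hmj : m < j := by simpa [Nat.lt_succ_iff] using hj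
    simp [Ring.choose_natCast, Nat.choose_eq_zero_of_lt hmj]

theorem seriesDefect_productSeries (φ ψ : V → ℕ → ℂ) (s : V) (m : ℕ) (v w : V) :
    W.seriesDefect φ ψ s m (W.productSeries v w) =
      W.productSeries v (W.adjointDefect ψ s m w) +
        ∑ j ∈ Finset.range (m + 1),
          (m.choose j : ℂ) • shift ((m : ℤ) - j) (W.productSeries (W.adjointDefect φ s j v) w) := by
  funext k
  simp only [seriesDefect_apply, Pi.add_apply, Finset.sum_apply, Pi.smul_apply, shift_apply,
    productSeries_apply]
  simp only [adjointDefect_apply, P_natCast_apply_P, map_sub, map_smul,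
    LinearMap.sub_apply, LinearMap.smul_apply, smul_sub, Finset.sum_sub_distrib, mul_smul]
  abel

variable {W} {S : Submodule ℂ V} {φ ψ : V → ℕ → ℂ}

theorem productSeries_mem_seriesGenWtSeq {i j : ℕ} {v w : V} (hv : v ∈ W.genWtSeq S φ i)
    (hw : w ∈ W.genWtSeq S ψ j) : W.productSeries v w ∈ W.seriesGenWtSeq S φ ψ (i + j) := by
  induction i generalizing v w j with
  | zero =>
    obtain rfl : v = 0 := hv
    rw [LinearMap.map_zero₂]
    exact zero_mem _
  | succ i ih_left =>
    induction j generalizing w with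
    | zero =>
      obtain rfl : w = 0 := hw
      rw [map_zero]
      exact zero_mem _
    | succ j ih_right =>
      refine mem_seriesGenWtSeq_succ.2 fun s hs m => ?_
      rw [seriesDefect_productSeries]
      refine add_mem (ih_right (hw s hs m)) (sum_mem fun l _ => Submodule.smul_mem _ _ ?_)
      have hseries : W.productSeries (W.adjointDefect φ s l v) w ∈
          W.seriesGenWtSeq S φ ψ (i + 1 + j) :=
        Nat.succ_add_eq_add_succ i j ▸ ih_left (hv s hs l) hw
      exact shift_mem_seriesGenWtSeq _ hseries

end Products

end VertexAlgebra

theorem product_of_generalized_weight_spaces_general {V : Type*} [AddCommGroup V] [Module ℂ V]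
    (W : VertexAlgebra V) (S : Submodule ℂ V) (φ ψ : V → ℕ → ℂ) {v w : V}
    (hv : v ∈ W.genWt S φ) (hw : w ∈ W.genWt S ψ) (k : ℤ) :
    W.P k v w ∈ W.genWt S (φ + ψ) := by
  obtain ⟨i, hvi⟩ := hv
  obtain ⟨j, hwj⟩ := hw
  obtain ⟨N, hN⟩ := W.exists_productSeries_eq_zero_of_le v w
  have hseries : W.productSeries v w ∈ W.seriesGenWtSeq S φ ψ (i + j) :=
    VertexAlgebra.productSeries_mem_seriesGenWtSeq hvi hwj
  exact ⟨_, VertexAlgebra.apply_mem_genWtSeq_add hseries hN (Int.self_le_toNat _)⟩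

open VertexAlgebra in
/-- products of generalized weight vectors of weights `φ` and `ψ` lie in the
generalized weight space of weight `φ + ψ`. -/
theorem product_of_generalized_weight_spaces {V : Type*} [AddCommGroup V] [Module ℂ V]
    (W : VertexAlgebra V) (S : Submodule ℂ V) (hS : W.IsConfSubalgebra S)
    (φ ψ : V → ℕ → ℂ) (hφ : W.IsWeight S φ) (hψ : W.IsWeight S ψ) :
    ∀ v ∈ W.genWt S φ, ∀ w ∈ W.genWt S ψ, ∀ k : ℤ,
      W.P k v w ∈ W.genWt S (fun s h => φ s h + ψ s h) :=
  fun _ hv _ hw => product_of_generalized_weight_spaces_general W S φ ψ hv hw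
end

section
/- Let $V$ be a finite reduced vertex algebra (no non-zero abelian ideals) and $N$ a nilpotent Lie conformal subalgebra of $V$. Then the adjoint action of every element of $N$ on $V$ is nilpotent: for each $s \in N$ and $v \in V$, iterated brackets $[s_{\lambda_1}[s_{\lambda_2}[\cdots[s_{\lambda_n} v]\cdots]]]$ vanish for sufficiently large $n$. -/
open scoped BigOperators

namespace VertexAlgebra

variable {V : Type*} [AddCommGroup V] [Module ℂ V]

/-- The lower central series of a Lie conformal subalgebra `N` (as a submodule of `V`):
`N^[0] = N`, `N^[k+1] = [N, N^[k]]`. -/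
def lcsOf (W : VertexAlgebra V) (N : Submodule ℂ V) : ℕ → Submodule ℂ V
  | 0 => N
  | k + 1 => W.posSpan N (lcsOf W N k)

/-- A finite reduced vertex algebra: no non-zero abelian ideals. -/
def IsReduced (W : VertexAlgebra V) : Prop :=
  ∀ I : Submodule ℂ V, W.IsAbelianIdeal I → I = ⊥

end VertexAlgebra

/-
Write `[s_λ v] = ∑ₘ λᵐ / m! • s_(m) v`. The modes `a_(m)`, `a ∈ N`, `m ≥ 0`, span a Lie algebra of
operators on `V`, nilpotent because `N` is. Every vector lies in a finite-dimensional subspace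
stable under these modes: by descent along the lower central series of `N`, this follows from the
Noetherianity of `V` over `ℂ[T]`. Hence `V` is the sum of the generalized weight spaces `V^φ` of
each `s ∈ N`, where `φ(λ)` is the generalized eigenvalue of `[s_λ ·]`.

For weight vectors `a ∈ V^ψ`, `b ∈ V^φ`, the operator `[s_λ ·]` acts on the products `a_(k) b` as
`H(λ) = φ(λ) + ψ(λ) exp (λ X)`, with `X` the shift `k ↦ k + 1`. On the other hand
`[s_λ [s_(-λ) ·]]` commutes with `T`, hence is polynomial in `λ` on the finite `ℂ[T]`-module `V`.
If some `a_(k) b` is non-zero, then `H(λ) H(-λ)` is polynomial in `λ`, and its `exp (λ X)`-term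
`ψ(λ) φ(-λ)` vanishes. So `V^ψ · V^φ = 0` for `ψ, φ ≠ 0`, the sum of the `V^φ` with `φ ≠ 0` is an
abelian ideal, and in a reduced vertex algebra only the weight `0` remains.
-/

section PolynomialModule

open Polynomial Finset

variable {K V : Type*} [CommRing K] [AddCommGroup V] [Module K V] (f : Module.End K V)

lemma finite_aeval_of_span_pow_apply_eq_top {s : Finset V}
    (hs : Submodule.span K {x | ∃ g ∈ s, ∃ k : ℕ, x = (f ^ k) g} = ⊤) :
    Module.Finite K[X] (Module.AEval' f) := by
  classical
  let S : Submodule K[X] (Module.AEval' f) := Submodule.span K[X] (s.image (Module.AEval'.of f))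
  have hle : (⊤ : Submodule K V) ≤
      (S.restrictScalars K).comap (Module.AEval'.of f).toLinearMap := by
    rw [← hs, Submodule.span_le]
    rintro _ ⟨g, hg, k, rfl⟩
    have hgS : Module.AEval'.of f g ∈ S :=
      Submodule.subset_span (Finset.mem_coe.2 (mem_image_of_mem _ hg))
    have hpow := S.smul_mem (X ^ k) hgS
    rwa [Module.AEval'.X_pow_smul_of] at hpow
  refine ⟨⟨s.image (Module.AEval'.of f), eq_top_iff.2 fun x _ => ?_⟩⟩
  obtain ⟨v, rfl⟩ := (Module.AEval'.of f).surjective x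
  exact hle (Submodule.mem_top (x := v))

lemma exists_finset_forall_le_of_mem_invtSubmodule [IsNoetherian K[X] (Module.AEval' f)]
    {A : Submodule K V} (hA : A ∈ f.invtSubmodule) :
    ∃ G : Finset V, (G : Set V) ⊆ A ∧ ∀ B ∈ f.invtSubmodule, (G : Set V) ⊆ B → A ≤ B := by
  classical
  obtain ⟨G, hG⟩ := IsNoetherian.noetherian (Module.AEval.mapSubmodule K V f ⟨A, hA⟩)
  refine ⟨G.image (Module.AEval'.of f).symm, ?_, fun B hB hGB => ?_⟩
  · intro g hg
    obtain ⟨x, hx, rfl⟩ := Finset.mem_image.1 hg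
    exact (Module.AEval.mem_mapSubmodule_apply K V f).1 (hG ▸ Submodule.subset_span hx)
  · have hle : Module.AEval.mapSubmodule K V f ⟨A, hA⟩ ≤
        Module.AEval.mapSubmodule K V f ⟨B, hB⟩ := by
      rw [← hG, Submodule.span_le]
      exact fun x hx => (Module.AEval.mem_mapSubmodule_apply K V f).2
        (hGB (Finset.mem_coe.2 (mem_image_of_mem _ hx)))
    exact (Module.AEval.mapSubmodule K V f).le_iff_le.1 hle

lemma linearIndependent_aeval_of_injective_sum_pow {ι : Type*} {b : ι → V}
    (hb : LinearIndependent K b)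
    (hf : ∀ (m : ℕ) (u : ℕ → V), (∀ k, u k ∈ Submodule.span K (Set.range b)) →
      ∑ k ∈ range m, (f ^ k) (u k) = 0 → ∀ k < m, u k = 0) :
    LinearIndependent K[X] fun i => Module.AEval'.of f (b i) := by
  rw [linearIndependent_iff']
  intro t g hg i hi
  set m := t.sup (fun i => (g i).natDegree) + 1
  have hm : ∀ i ∈ t, (g i).natDegree < m := fun i hi =>
    Nat.lt_succ_of_le (Finset.le_sup (f := fun i => (g i).natDegree) hi)
  have hsum : ∑ k ∈ range m, (f ^ k) (∑ i ∈ t, (g i).coeff k • b i) = 0 := by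
    apply (Module.AEval'.of f).injective
    rw [map_zero, ← hg]
    simp only [map_sum]
    rw [Finset.sum_comm]
    refine Finset.sum_congr rfl fun i hi => ?_
    change _ = Module.AEval'.of f (aeval f (g i) (b i))
    simp only [aeval_eq_sum_range' (hm i hi), LinearMap.sum_apply, LinearMap.smul_apply, map_sum,
      map_smul]
  ext k
  rcases lt_or_ge k m with hk | hk
  · have hcoeff := hf m _ (fun k => Submodule.sum_mem _ fun i _ =>
      Submodule.smul_mem _ _ (Submodule.subset_span ⟨i, rfl⟩)) hsum k hk
    exact linearIndependent_iff'.1 hb t _ hcoeff i hi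
  · exact coeff_eq_zero_of_natDegree_lt ((hm i hi).trans_le hk)

end PolynomialModule

lemma finiteDimensional_of_sum_pow_apply_eq_zero {K V : Type*} [Field K] [AddCommGroup V]
    [Module K V] (f : Module.End K V) [IsNoetherian (Polynomial K) (Module.AEval' f)]
    {U : Submodule K V}
    (hU : ∀ (m : ℕ) (u : ℕ → V), (∀ k, u k ∈ U) →
      ∑ k ∈ Finset.range (m + 1), (f ^ k) (u k) = 0 → u m = 0) :
    FiniteDimensional K U := by
  have hall : ∀ (m : ℕ) (u : ℕ → V), (∀ k, u k ∈ U) →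
      ∑ k ∈ Finset.range m, (f ^ k) (u k) = 0 → ∀ k < m, u k = 0 := by
    intro m u hu
    induction m with
    | zero => simp
    | succ m ih =>
      intro hsum k hk
      have htop := hU m u hu hsum
      rw [Finset.sum_range_succ, htop, map_zero, add_zero] at hsum
      rcases Nat.lt_succ_iff_lt_or_eq.1 hk with hk | rfl
      exacts [ih hsum k hk, htop]
  let b := Module.Basis.ofVectorSpace K U
  have hspan : Submodule.span K (Set.range (U.subtype ∘ b)) = U := by
    rw [Set.range_comp, Submodule.span_image, b.span_eq, Submodule.map_top, Submodule.range_subtype]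
  have hb := linearIndependent_aeval_of_injective_sum_pow f
    (b.linearIndependent.map' U.subtype U.ker_subtype) (by rwa [hspan])
  have := hb.finite_of_isNoetherian
  exact Module.Basis.finiteDimensional_of_finite b

namespace VertexAlgebra

open Finset.HasAntidiagonal (antidiagonal mem_antidiagonal)
open Module.End (invtSubmodule)
open scoped Nat

variable {V : Type*} [AddCommGroup V] [Module ℂ V] (W : VertexAlgebra V)

/-- The coefficient of `λ ^ m` in the `λ`-bracket `[a_λ b] = ∑ₘ λᵐ / m! • a_(m) b`. Dividing by `m!`
turns the Leibniz and commutator formulas into identities without binomial coefficients. -/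
noncomputable def divMode (m : ℕ) : V →ₗ[ℂ] V →ₗ[ℂ] V :=
  (m ! : ℂ)⁻¹ • W.P m

lemma divMode_apply (m : ℕ) (a b : V) : W.divMode m a b = (m ! : ℂ)⁻¹ • W.P m a b := rfl

lemma P_natCast (m : ℕ) (a b : V) : W.P m a b = (m ! : ℂ) • W.divMode m a b := by
  rw [divMode_apply, smul_inv_smul₀ (by exact_mod_cast m.factorial_ne_zero)]

lemma divMode_eq_zero_iff {m : ℕ} {a b : V} : W.divMode m a b = 0 ↔ W.P m a b = 0 := by
  rw [divMode_apply, smul_eq_zero_iff_right (inv_ne_zero (by exact_mod_cast m.factorial_ne_zero))]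

lemma exists_forall_divMode_eq_zero (a b : V) : ∃ n, ∀ m ≥ n, W.divMode m a b = 0 := by
  simpa only [divMode_eq_zero_iff] using W.field_ax a b

lemma D_divMode (m : ℕ) (a b : V) :
    W.D (W.divMode m a b) = W.divMode m (W.D a) b + W.divMode m a (W.D b) := by
  simp only [divMode_apply, map_smul, W.D_deriv, smul_add]

lemma divMode_zero_D_left (a b : V) : W.divMode 0 (W.D a) b = 0 := by
  simp [divMode_apply, W.transl_inv]

lemma divMode_succ_D_left (m : ℕ) (a b : V) :
    W.divMode (m + 1) (W.D a) b = -W.divMode m a b := by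
  have hm : (m : ℂ) + 1 ≠ 0 := by exact_mod_cast m.succ_ne_zero
  have hcoe : ((m + 1 : ℕ) : ℤ) - 1 = m := by push_cast; ring
  rw [divMode_apply, divMode_apply, W.transl_inv, hcoe, smul_smul, ← neg_smul, Nat.factorial_succ]
  congr 1
  push_cast
  field_simp

lemma divMode_zero_D (a b : V) : W.divMode 0 a (W.D b) = W.D (W.divMode 0 a b) := by
  rw [D_divMode, divMode_zero_D_left, zero_add]

lemma divMode_succ_D (m : ℕ) (a b : V) :
    W.divMode (m + 1) a (W.D b) = W.D (W.divMode (m + 1) a b) + W.divMode m a b := by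
  rw [D_divMode, divMode_succ_D_left]
  abel

lemma P_natCast_P (m : ℕ) (k : ℤ) (a b c : V) :
    W.P m a (W.P k b c) = W.P k b (W.P m a c) +
      ∑ p ∈ antidiagonal m, (m.choose p.1 : ℂ) • W.P (k + p.2) (W.P p.1 a b) c := by
  have hsupp : (Function.support fun j : ℕ =>
      ((Ring.choose (m : ℤ) j : ℤ) : ℂ) • W.P (m + k - j) (W.P j a b) c) ⊆
      Finset.range (m + 1) := fun j => by
    contrapose!
    intro hj
    have hlt : m < j := by simpa [Nat.lt_succ_iff] using hj
    simp [Ring.choose_natCast, Nat.choose_eq_zero_of_lt hlt]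
  rw [← sub_eq_iff_eq_add', W.borcherds, finsum_eq_sum_of_support_subset _ hsupp,
    Finset.Nat.sum_antidiagonal_eq_sum_range_succ
      (fun i j => (m.choose i : ℂ) • W.P (k + j) (W.P i a b) c)]
  refine Finset.sum_congr rfl fun j hj => ?_
  have hjm : j ≤ m := Finset.mem_range_succ_iff.1 hj
  rw [Ring.choose_natCast, Nat.cast_sub hjm, show (m : ℤ) + k - j = k + (m - j) by ring]
  simp

/-- The commutator formula in the form `[a_λ, b_(k)] = ∑ⱼ λʲ / j! • ([a_λ b])_(k + j)`. -/
lemma divMode_P (m : ℕ) (k : ℤ) (a b c : V) :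
    W.divMode m a (W.P k b c) = W.P k b (W.divMode m a c) +
      ∑ p ∈ antidiagonal m, (p.2 ! : ℂ)⁻¹ • W.P (k + p.2) (W.divMode p.1 a b) c := by
  simp only [divMode_apply, P_natCast_P, smul_add, map_smul, Finset.smul_sum,
    LinearMap.smul_apply, smul_smul]
  congr 1
  refine Finset.sum_congr rfl fun p hp => ?_
  obtain rfl := mem_antidiagonal.1 hp
  have hne (n : ℕ) : (n ! : ℂ) ≠ 0 := by exact_mod_cast n.factorial_ne_zero
  rw [Nat.cast_add_choose]
  field_simp [hne]

lemma posSpan_le {A B C : Submodule ℂ V} :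
    W.posSpan A B ≤ C ↔ ∀ a ∈ A, ∀ b ∈ B, ∀ m, W.divMode m a b ∈ C := by
  rw [posSpan, Submodule.span_le]
  constructor
  · intro h a ha b hb m
    exact C.smul_mem _ (h ⟨a, ha, b, hb, m, rfl⟩)
  · rintro h _ ⟨a, ha, b, hb, m, rfl⟩
    rw [P_natCast]
    exact C.smul_mem _ (h a ha b hb m)

lemma divMode_mem_posSpan {A B : Submodule ℂ V} {a b : V} (ha : a ∈ A) (hb : b ∈ B) (m : ℕ) :
    W.divMode m a b ∈ W.posSpan A B :=
  W.posSpan_le.1 le_rfl a ha b hb m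

lemma posSpan_eq_iSup_map₂ (A B : Submodule ℂ V) :
    W.posSpan A B = ⨆ m, Submodule.map₂ (W.divMode m) A B := by
  refine eq_of_forall_ge_iff fun C => ?_
  simp only [posSpan_le, iSup_le_iff, Submodule.map₂_le]
  tauto

lemma posSpan_sup_right (A B C : Submodule ℂ V) :
    W.posSpan A (B ⊔ C) = W.posSpan A B ⊔ W.posSpan A C := by
  simp only [posSpan_eq_iSup_map₂, Submodule.map₂_sup_right, iSup_sup_eq]

lemma posSpan_mem_invtSubmodule {A B : Submodule ℂ V} (hA : A ∈ invtSubmodule W.D)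
    (hB : B ∈ invtSubmodule W.D) : W.posSpan A B ∈ invtSubmodule W.D := by
  rw [Module.End.mem_invtSubmodule, posSpan_le]
  intro a ha b hb m
  have hDa : W.D a ∈ A := hA ha
  have hDb : W.D b ∈ B := hB hb
  rw [Submodule.mem_comap, D_divMode]
  exact add_mem (W.divMode_mem_posSpan hDa hb m) (W.divMode_mem_posSpan ha hDb m)

lemma posSpan_le_of_generators {G : Set V} {A F T : Submodule ℂ V}
    (hGA : ∀ B ∈ invtSubmodule W.D, G ⊆ B → A ≤ B)
    (hGT : ∀ g ∈ G, ∀ x ∈ F, ∀ m, W.divMode m g x ∈ T) : W.posSpan A F ≤ T := by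
  let B : Submodule ℂ V := ⨅ x ∈ F, ⨅ m, T.comap ((W.divMode m).flip x)
  have hB : ∀ a, a ∈ B ↔ ∀ x ∈ F, ∀ m, W.divMode m a x ∈ T := by
    simp [B, Submodule.mem_iInf]
  have hBD : B ∈ invtSubmodule W.D := by
    intro a ha
    refine (hB _).2 fun x hx m => ?_
    rcases m with _ | m
    · rw [divMode_zero_D_left]
      exact T.zero_mem
    · rw [divMode_succ_D_left]
      exact T.neg_mem ((hB a).1 ha x hx m)
  exact W.posSpan_le.2 fun a ha => (hB a).1 (hGA B hBD (fun g hg => (hB g).2 (hGT g hg)) ha)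

lemma IsConfSubalgebra.mem_invtSubmodule {W : VertexAlgebra V} {N : Submodule ℂ V}
    (hN : W.IsConfSubalgebra N) : N ∈ invtSubmodule W.D :=
  hN.1

lemma IsConfSubalgebra.posSpan_le {W : VertexAlgebra V} {N : Submodule ℂ V}
    (hN : W.IsConfSubalgebra N) : W.posSpan N N ≤ N :=
  Submodule.span_le.2 (by rintro _ ⟨a, ha, b, hb, m, rfl⟩; exact hN.2 a ha b hb m)

lemma posSpan_mono_right {A B C : Submodule ℂ V} (h : B ≤ C) : W.posSpan A B ≤ W.posSpan A C :=
  W.posSpan_le.2 fun _ ha _ hb m => W.divMode_mem_posSpan ha (h hb) m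

lemma lcsOf_antitone {N : Submodule ℂ V} (hN : W.IsConfSubalgebra N) : Antitone (W.lcsOf N) := by
  refine antitone_nat_of_succ_le fun i => ?_
  induction i with
  | zero => exact hN.posSpan_le
  | succ i ih => exact W.posSpan_mono_right ih

lemma lcsOf_mem_invtSubmodule {N : Submodule ℂ V} (hN : N ∈ invtSubmodule W.D) (i : ℕ) :
    W.lcsOf N i ∈ invtSubmodule W.D := by
  induction i with
  | zero => exact hN
  | succ i ih => exact W.posSpan_mem_invtSubmodule hN ih

lemma IsFinite.finite_aeval {W : VertexAlgebra V} (hfin : W.IsFinite) :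
    Module.Finite (Polynomial ℂ) (Module.AEval' W.D) := by
  obtain ⟨s, hs⟩ := hfin
  exact finite_aeval_of_span_pow_apply_eq_top W.D (eq_top_iff.2 fun v _ => hs v)

end VertexAlgebra

lemma exists_le_of_fg_of_le_iSup {R M ι : Type*} [Semiring R] [AddCommMonoid M] [Module R M]
    [Nonempty ι] {S : ι → Submodule R M} (hS : Directed (· ≤ ·) S) {F : Submodule R M} (hF : F.FG)
    (hle : F ≤ ⨆ i, S i) : ∃ i, F ≤ S i := by
  obtain ⟨_, ⟨i, rfl⟩, hi⟩ := (Submodule.fg_iff_compact F).1 hF (Set.range S) _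
    (Set.range_nonempty S) (directedOn_range.2 hS) isLUB_iSup hle
  exact ⟨i, hi⟩

namespace VertexAlgebra

open Module.End (invtSubmodule)

variable {V : Type*} [AddCommGroup V] [Module ℂ V] (W : VertexAlgebra V)

/-- The vectors `v` for which every `[z_λ v]` with `z ∈ G` is a polynomial in `λ` of degree less
than `n`. In particular `modeKer G 0` is the annihilator of `G`. -/
noncomputable def modeKer (G : Set V) (n : ℕ) : Submodule ℂ V :=
  ⨅ z ∈ G, ⨅ j ≥ n, LinearMap.ker (W.divMode j z)

variable {W} in
lemma mem_modeKer {G : Set V} {n : ℕ} {v : V} :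
    v ∈ W.modeKer G n ↔ ∀ z ∈ G, ∀ j ≥ n, W.divMode j z v = 0 := by
  simp [modeKer, Submodule.mem_iInf]

lemma modeKer_mono (G : Set V) : Monotone (W.modeKer G) := fun _ _ hmn _ hv =>
  mem_modeKer.2 fun z hz j hj => mem_modeKer.1 hv z hz j (hmn.trans hj)

lemma iSup_modeKer_eq_top {G : Set V} (hG : G.Finite) : ⨆ n, W.modeKer G n = ⊤ := by
  refine eq_top_iff.2 fun v _ => ?_
  choose n hn using fun z => W.exists_forall_divMode_eq_zero z v
  obtain ⟨N, hN⟩ := (hG.image n).bddAbove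
  refine (Submodule.mem_iSup_of_directed _ (W.modeKer_mono G).directed_le).2 ⟨N, ?_⟩
  exact mem_modeKer.2 fun z hz j hj => hn z j ((hN (Set.mem_image_of_mem n hz)).trans hj)

lemma exists_le_modeKer {G : Set V} (hG : G.Finite) {F : Submodule ℂ V} (hF : F.FG) :
    ∃ n, F ≤ W.modeKer G n :=
  exists_le_of_fg_of_le_iSup (W.modeKer_mono G).directed_le hF
    (le_top.trans (W.iSup_modeKer_eq_top hG).ge)

lemma modeKer_zero_le_of_generators {G : Set V} {A : Submodule ℂ V}
    (hGA : ∀ B ∈ invtSubmodule W.D, G ⊆ B → A ≤ B) : W.modeKer G 0 ≤ W.modeKer A 0 := by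
  have hkill : W.posSpan A (W.modeKer G 0) ≤ ⊥ :=
    W.posSpan_le_of_generators hGA fun g hg _ hx m => mem_modeKer.1 hx g hg m m.zero_le
  exact fun v hv => mem_modeKer.2 fun z hz j _ => W.posSpan_le.1 hkill z hz v hv j

lemma divMode_mem_modeKer {G B : Set V} {n : ℕ} {b v : V} (hv : v ∈ W.modeKer G n)
    (hvB : v ∈ W.modeKer B 0) (hbG : ∀ z ∈ G, ∀ l, W.divMode l b z ∈ B) (k : ℕ) :
    W.divMode k b v ∈ W.modeKer G n := by
  refine mem_modeKer.2 fun z hz j hj => ?_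
  have hcomm := W.divMode_P k j b z v
  have hzv : W.P j z v = 0 := W.divMode_eq_zero_iff.1 (mem_modeKer.1 hv z hz j hj)
  have hsum : ∀ p ∈ Finset.HasAntidiagonal.antidiagonal k,
      ((p.2.factorial : ℂ)⁻¹) • W.P (j + p.2) (W.divMode p.1 b z) v = 0 := by
    intro p _
    have hkill := mem_modeKer.1 hvB _ (hbG z hz p.1) (j + p.2) (Nat.zero_le _)
    rw [divMode_eq_zero_iff, Nat.cast_add] at hkill
    rw [hkill, smul_zero]
  rw [hzv, map_zero, Finset.sum_eq_zero hsum, add_zero] at hcomm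
  exact W.divMode_eq_zero_iff.2 hcomm.symm

lemma divMode_D_pow_eq_zero {z u : V} {n : ℕ} (hu : ∀ j > n, W.divMode j z u = 0) (k : ℕ) :
    ∀ j > n + k, W.divMode j z ((W.D ^ k) u) = 0 := by
  induction k with
  | zero => exact hu
  | succ k ih =>
    intro j hj
    obtain ⟨j, rfl⟩ : ∃ i, j = i + 1 := ⟨j - 1, by omega⟩
    rw [pow_succ', Module.End.mul_apply, divMode_succ_D, ih (j + 1) (by omega), ih j (by omega),
      map_zero, add_zero]

lemma divMode_add_D_pow {z u : V} {n : ℕ} (hu : ∀ j > n, W.divMode j z u = 0) (k : ℕ) :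
    W.divMode (n + k) z ((W.D ^ k) u) = W.divMode n z u := by
  induction k with
  | zero => rfl
  | succ k ih =>
    rw [pow_succ', Module.End.mul_apply, ← add_assoc, divMode_succ_D, ih,
      W.divMode_D_pow_eq_zero hu k _ (Nat.lt_succ_self _), map_zero, zero_add]

/-- The sum of all finite-dimensional subspaces invariant under the modes of `N`. -/
noncomputable def locFin (N : Submodule ℂ V) : Submodule ℂ V :=
  ⨆ F : {F : Submodule ℂ V // F.FG ∧ W.posSpan N F ≤ F}, F.1

lemma le_locFin {N F : Submodule ℂ V} (hF : F.FG) (hNF : W.posSpan N F ≤ F) : F ≤ W.locFin N :=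
  le_iSup (fun F : {F : Submodule ℂ V // F.FG ∧ W.posSpan N F ≤ F} => F.1) ⟨F, hF, hNF⟩

lemma modeKer_zero_le_locFin (N : Submodule ℂ V) : W.modeKer N 0 ≤ W.locFin N := by
  intro v hv
  refine W.le_locFin (Submodule.fg_span_singleton v) (W.posSpan_le.2 fun a ha x hx m => ?_)
    (Submodule.mem_span_singleton_self v)
  obtain ⟨c, rfl⟩ := Submodule.mem_span_singleton.1 hx
  rw [map_smul, mem_modeKer.1 hv a ha m m.zero_le, smul_zero]
  exact Submodule.zero_mem _

section Noetherian

variable [IsNoetherian (Polynomial ℂ) (Module.AEval' W.D)]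

lemma posSpan_fg {N F : Submodule ℂ V} (hN : N ∈ invtSubmodule W.D) (hF : F.FG) :
    (W.posSpan N F).FG := by
  obtain ⟨G, -, hG⟩ := exists_finset_forall_le_of_mem_invtSubmodule W.D hN
  obtain ⟨n, hn⟩ := W.exists_le_modeKer G.finite_toSet hF
  let T : Submodule ℂ V :=
    ⨆ m ∈ Finset.range n, Submodule.map₂ (W.divMode m) (Submodule.span ℂ G) F
  have hT : T.FG := Submodule.fg_biSup _ _ fun m _ => (Submodule.fg_span G.finite_toSet).map₂ _ hF
  suffices hle : W.posSpan N F ≤ T by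
    have := isNoetherian_of_fg_of_noetherian T hT
    exact Submodule.FG.of_le_of_isNoetherian hle
  refine W.posSpan_le_of_generators hG fun g hg x hx m => ?_
  rcases lt_or_ge m n with hm | hm
  · exact Submodule.mem_iSup_of_mem m (Submodule.mem_iSup_of_mem (Finset.mem_range.2 hm)
      (Submodule.apply_mem_map₂ _ (Submodule.subset_span hg) hx))
  · rw [mem_modeKer.1 (hn hx) g hg m hm]
    exact T.zero_mem

lemma finiteDimensional_of_disjoint_modeKer {G : Set V} {n : ℕ} {U : Submodule ℂ V}
    (hle : U ≤ W.modeKer G (n + 1)) (hdisj : Disjoint U (W.modeKer G n)) :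
    FiniteDimensional ℂ U := by
  refine finiteDimensional_of_sum_pow_apply_eq_zero W.D fun m u hu hsum => ?_
  suffices hmem : u m ∈ W.modeKer G n from Submodule.disjoint_def.1 hdisj _ (hu m) hmem
  refine mem_modeKer.2 fun z hz j hj => ?_
  have hhigh (k : ℕ) : ∀ j > n, W.divMode j z (u k) = 0 := mem_modeKer.1 (hle (hu k)) z hz
  rcases hj.eq_or_lt with rfl | hj
  · have hlower : ∀ k ∈ Finset.range m, W.divMode (n + m) z ((W.D ^ k) (u k)) = 0 := fun k hk =>
      W.divMode_D_pow_eq_zero (hhigh k) k _ (by have := Finset.mem_range.1 hk; omega)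
    have happly := congrArg (W.divMode (n + m) z) hsum
    rwa [Finset.sum_range_succ, map_add, map_sum, Finset.sum_eq_zero hlower, zero_add,
      divMode_add_D_pow W (hhigh m), map_zero] at happly
  · exact hhigh m j hj

lemma le_locFin_of_posSpan_le_sup {N F : Submodule ℂ V} (hN : N ∈ invtSubmodule W.D) (hF : F.FG)
    (hNF : W.posSpan N F ≤ F ⊔ W.locFin N) : F ≤ W.locFin N := by
  have hsup {A B : Submodule ℂ V} (hA : A.FG ∧ W.posSpan N A ≤ A)
      (hB : B.FG ∧ W.posSpan N B ≤ B) : (A ⊔ B).FG ∧ W.posSpan N (A ⊔ B) ≤ A ⊔ B :=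
    ⟨hA.1.sup hB.1, (W.posSpan_sup_right N A B).trans_le (sup_le_sup hA.2 hB.2)⟩
  have hbot : (⊥ : Submodule ℂ V).FG ∧ W.posSpan N ⊥ ≤ ⊥ :=
    ⟨Submodule.fg_bot, by simp [posSpan_eq_iSup_map₂]⟩
  have : Nonempty {F : Submodule ℂ V // F.FG ∧ W.posSpan N F ≤ F} := ⟨⟨⊥, hbot⟩⟩
  have hdir : Directed (· ≤ ·)
      fun A : {F : Submodule ℂ V // F.FG ∧ W.posSpan N F ≤ F} => F ⊔ A.1 := fun A B =>
    ⟨⟨A.1 ⊔ B.1, hsup A.2 B.2⟩, sup_le_sup_left le_sup_left F, sup_le_sup_left le_sup_right F⟩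
  rw [locFin, sup_iSup] at hNF
  obtain ⟨A, hA⟩ := exists_le_of_fg_of_le_iSup hdir (W.posSpan_fg hN hF) hNF
  have hFA : W.posSpan N (F ⊔ A.1) ≤ F ⊔ A.1 :=
    (W.posSpan_sup_right N F A.1).trans_le (sup_le hA (A.2.2.trans le_sup_right))
  exact le_sup_left.trans (W.le_locFin (hF.sup A.2.1) hFA)

lemma le_locFin_of_chain {N : Submodule ℂ V} (hN : N ∈ invtSubmodule W.D)
    {X : ℕ → Submodule ℂ V} (hmono : Monotone X) (hstable : ∀ n, W.posSpan N (X n) ≤ X n)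
    (hzero : X 0 ≤ W.locFin N)
    (hfin : ∀ n, ∀ U ≤ X (n + 1), Disjoint U (X n) → FiniteDimensional ℂ U) (n : ℕ) :
    X n ≤ W.locFin N := by
  induction n with
  | zero => exact hzero
  | succ n ih =>
    obtain ⟨U, hdisj, hsup⟩ := IsModularLattice.exists_disjoint_and_sup_eq (hmono n.le_succ)
    have hUle : U ≤ X (n + 1) := le_sup_right.trans hsup.le
    have hU : U.FG := (Submodule.fg_iff_finiteDimensional U).2 (hfin n U hUle hdisj.symm)
    have hNU : W.posSpan N U ≤ U ⊔ W.locFin N :=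
      calc W.posSpan N U ≤ X (n + 1) := (W.posSpan_mono_right hUle).trans (hstable _)
        _ ≤ U ⊔ W.locFin N := hsup.ge.trans (sup_le (ih.trans le_sup_right) le_sup_left)
    exact hsup.ge.trans (sup_le ih (W.le_locFin_of_posSpan_le_sup hN hU hNU))

lemma modeKer_lcsOf_le_locFin {N : Submodule ℂ V} (hN : W.IsConfSubalgebra N) (i : ℕ) :
    W.modeKer (W.lcsOf N i) 0 ≤ W.locFin N := by
  induction i with
  | zero => exact W.modeKer_zero_le_locFin N
  | succ i ih =>
    obtain ⟨G, hGN, hG⟩ := exists_finset_forall_le_of_mem_invtSubmodule W.D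
      (W.lcsOf_mem_invtSubmodule hN.mem_invtSubmodule i)
    let X (n : ℕ) := W.modeKer (W.lcsOf N (i + 1)) 0 ⊓ W.modeKer G n
    have hX : Monotone X := fun _ _ hmn => inf_le_inf_left _ (W.modeKer_mono _ hmn)
    have hstable (n : ℕ) : W.posSpan N (X n) ≤ X n := W.posSpan_le.2 fun b hb v hv k =>
      ⟨W.divMode_mem_modeKer hv.1 hv.1 (fun z hz l => W.lcsOf_antitone hN (i + 1).le_succ
          (W.divMode_mem_posSpan hb hz l)) k,
        W.divMode_mem_modeKer hv.2 hv.1 (fun z hz l => W.divMode_mem_posSpan hb (hGN hz) l) k⟩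
    have hzero : X 0 ≤ W.locFin N :=
      inf_le_right.trans ((W.modeKer_zero_le_of_generators hG).trans ih)
    have hfin (n : ℕ) (U : Submodule ℂ V) (hU : U ≤ X (n + 1)) (hdisj : Disjoint U (X n)) :
        FiniteDimensional ℂ U := by
      refine W.finiteDimensional_of_disjoint_modeKer (hU.trans inf_le_right) ?_
      rw [disjoint_iff, ← le_bot_iff, ← disjoint_iff.1 hdisj]
      exact le_inf inf_le_left (inf_le_inf_right _ (hU.trans inf_le_left))
    intro v hv
    obtain ⟨n, hn⟩ := W.exists_le_modeKer G.finite_toSet (Submodule.fg_span_singleton v)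
    exact W.le_locFin_of_chain hN.mem_invtSubmodule hX hstable hzero hfin n
      ⟨hv, hn (Submodule.mem_span_singleton_self v)⟩

lemma locFin_eq_top {N : Submodule ℂ V} (hN : W.IsConfSubalgebra N)
    (hnilp : ∃ k, W.lcsOf N k = ⊥) : W.locFin N = ⊤ := by
  obtain ⟨k, hk⟩ := hnilp
  refine eq_top_iff.2 (le_trans (fun v _ => mem_modeKer.2 fun z hz j _ => ?_)
    (W.modeKer_lcsOf_le_locFin hN k))
  rw [hk, SetLike.mem_coe, Submodule.mem_bot] at hz
  rw [hz, map_zero, LinearMap.zero_apply]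

end Noetherian

end VertexAlgebra

section JointEigenspace

variable {ι R M : Type*} [CommRing R] [AddCommGroup M] [Module R M]

/-- The ascending chain `M₀ = 0`, `Mᵢ₊₁ = {v | f h v - χ h • v ∈ Mᵢ for all h}` of joint generalized
eigenvectors of a family of (possibly non-commuting) endomorphisms. -/
def jointEigenChain (f : ι → Module.End R M) (χ : ι → R) : ℕ → Submodule R M
  | 0 => ⊥
  | i + 1 => ⨅ h, (jointEigenChain f χ i).comap (f h - χ h • 1)

/-- The union of the chain `jointEigenChain f χ`. -/
def jointGenEigenspace (f : ι → Module.End R M) (χ : ι → R) : Submodule R M :=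
  ⨆ i, jointEigenChain f χ i

variable {f : ι → Module.End R M} {χ : ι → R}

lemma mem_jointEigenChain_succ {i : ℕ} {v : M} :
    v ∈ jointEigenChain f χ (i + 1) ↔ ∀ h, f h v - χ h • v ∈ jointEigenChain f χ i := by
  simp [jointEigenChain, Submodule.mem_iInf]

lemma jointEigenChain_mono : Monotone (jointEigenChain f χ) := by
  refine monotone_nat_of_le_succ fun i => ?_
  induction i with
  | zero => exact bot_le
  | succ i ih =>
    exact fun v hv => mem_jointEigenChain_succ.2 fun h => ih (mem_jointEigenChain_succ.1 hv h)

lemma mem_jointGenEigenspace {v : M} :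
    v ∈ jointGenEigenspace f χ ↔ ∃ i, v ∈ jointEigenChain f χ i :=
  Submodule.mem_iSup_of_directed _ jointEigenChain_mono.directed_le

lemma apply_mem_jointEigenChain {i : ℕ} {v : M} (hv : v ∈ jointEigenChain f χ i)
    (h : ι) : f h v ∈ jointEigenChain f χ i := by
  have hsub : f h v - χ h • v ∈ jointEigenChain f χ i :=
    mem_jointEigenChain_succ.1 (jointEigenChain_mono i.le_succ hv) h
  exact (Submodule.sub_mem_iff_left _ (Submodule.smul_mem _ _ hv)).1 hsub

lemma map_jointEigenChain_le {M' : Type*} [AddCommGroup M'] [Module R M']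
    {f' : ι → Module.End R M'} {g : M →ₗ[R] M'} (hg : ∀ h v, g (f h v) = f' h (g v)) (i : ℕ) :
    (jointEigenChain f χ i).map g ≤ jointEigenChain f' χ i := by
  induction i with
  | zero => simp [jointEigenChain]
  | succ i ih =>
    rintro _ ⟨v, hv, rfl⟩
    refine mem_jointEigenChain_succ.2 fun h => ih ⟨_, mem_jointEigenChain_succ.1 hv h, ?_⟩
    rw [map_sub, map_smul, hg]

lemma map_jointGenEigenspace_le {M' : Type*} [AddCommGroup M'] [Module R M']
    {f' : ι → Module.End R M'} {g : M →ₗ[R] M'} (hg : ∀ h v, g (f h v) = f' h (g v)) :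
    (jointGenEigenspace f χ).map g ≤ jointGenEigenspace f' χ := by
  rw [jointGenEigenspace, Submodule.map_iSup]
  exact iSup_mono (map_jointEigenChain_le hg)

end JointEigenspace

section LieModule

open LieModule

lemma genWeightSpace_le_jointGenEigenspace {ι R L M : Type*} [CommRing R] [LieRing L]
    [LieAlgebra R L] [AddCommGroup M] [Module R M] [LieRingModule L M] [LieModule R L M]
    [LieRing.IsNilpotent L] [IsNoetherian R M] [LinearWeights R L M] (t : ι → L) (χ : L → R) :
    (genWeightSpace M χ).toSubmodule ≤
      jointGenEigenspace (fun h => toEnd R L M (t h)) fun h => χ (t h) := by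
  have hnil : IsNilpotent L (shiftedGenWeightSpace R L M χ) := inferInstance
  obtain ⟨k, hk⟩ := (isNilpotent_iff_exists_ucs_eq_top R).1 hnil
  have hucs (i : ℕ) : ∀ z ∈ (⊥ : LieSubmodule R L (shiftedGenWeightSpace R L M χ)).ucs i,
      (z : M) ∈ jointEigenChain (fun h => toEnd R L M (t h)) (fun h => χ (t h)) i := by
    induction i with
    | zero =>
      intro z hz
      rw [LieSubmodule.ucs_zero, LieSubmodule.mem_bot] at hz
      rw [hz]
      exact Submodule.zero_mem _
    | succ i ih =>
      intro z hz
      rw [LieSubmodule.ucs_succ, LieSubmodule.mem_normalizer] at hz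
      exact mem_jointEigenChain_succ.2 fun h => ih _ (hz (t h))
  exact fun v hv => mem_jointGenEigenspace.2 ⟨k, hucs k ⟨v, hv⟩ (hk ▸ LieSubmodule.mem_top _)⟩

lemma iSup_jointGenEigenspace_toEnd_eq_top {ι K L M : Type*} [Field K] [CharZero K] [LieRing L]
    [LieAlgebra K L] [AddCommGroup M] [Module K M] [LieRingModule L M] [LieModule K L M]
    [LieRing.IsNilpotent L] [FiniteDimensional K M] [IsTriangularizable K L M] (t : ι → L) :
    ⨆ χ, jointGenEigenspace (fun h => toEnd K L M (t h)) χ = ⊤ := by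
  rw [eq_top_iff, ← LieSubmodule.top_toSubmodule (L := L), ← iSup_genWeightSpace_eq_top K L M,
    LieSubmodule.iSup_toSubmodule]
  exact iSup_le fun χ => (genWeightSpace_le_jointGenEigenspace t χ).trans
    (le_iSup (jointGenEigenspace fun h => toEnd K L M (t h)) _)

end LieModule

namespace VertexAlgebra

open Finset.HasAntidiagonal (antidiagonal)
open Module.End (invtSubmodule)
open LieModule (toEnd)

attribute [local instance 100] LieRing.ofAssociativeRing

variable {V : Type*} [AddCommGroup V] [Module ℂ V] (W : VertexAlgebra V)

/-- The span of the operators `a_(m)` with `a ∈ A` and `m ≥ 0`. -/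
noncomputable def modeSpan (A : Submodule ℂ V) : Submodule ℂ (Module.End ℂ V) :=
  ⨆ m, A.map (W.divMode m)

lemma divMode_mem_modeSpan {A : Submodule ℂ V} {a : V} (ha : a ∈ A) (m : ℕ) :
    W.divMode m a ∈ W.modeSpan A :=
  Submodule.mem_iSup_of_mem m (Submodule.mem_map_of_mem ha)

lemma modeSpan_le {A : Submodule ℂ V} {S : Submodule ℂ (Module.End ℂ V)} :
    W.modeSpan A ≤ S ↔ ∀ m, ∀ a ∈ A, W.divMode m a ∈ S := by
  simp only [modeSpan, iSup_le_iff, Submodule.map_le_iff_le_comap]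
  rfl

lemma modeSpan_mono {A B : Submodule ℂ V} (h : A ≤ B) : W.modeSpan A ≤ W.modeSpan B :=
  iSup_mono fun _ => Submodule.map_mono h

lemma modeSpan_bot : W.modeSpan ⊥ = ⊥ := by
  simp [modeSpan]

lemma lie_divMode_mem_modeSpan {A B : Submodule ℂ V} {a b : V} (ha : a ∈ A) (hb : b ∈ B)
    (m k : ℕ) : ⁅W.divMode m a, W.divMode k b⁆ ∈ W.modeSpan (W.posSpan A B) := by
  have hlie : ⁅W.divMode m a, W.divMode k b⁆ = (k.factorial : ℂ)⁻¹ • ∑ p ∈ antidiagonal m,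
      (p.2.factorial : ℂ)⁻¹ • ((k + p.2).factorial : ℂ) •
        W.divMode (k + p.2) (W.divMode p.1 a b) := by
    ext c
    rw [LieRing.of_associative_ring_bracket, LinearMap.sub_apply, Module.End.mul_apply,
      Module.End.mul_apply, W.divMode_apply k b c, W.divMode_apply k b, map_smul, ← smul_sub,
      divMode_P, add_sub_cancel_left]
    simp only [LinearMap.smul_apply, LinearMap.sum_apply, ← P_natCast, Nat.cast_add]
  rw [hlie]
  exact Submodule.smul_mem _ _ (Submodule.sum_mem _ fun p _ => Submodule.smul_mem _ _
    (Submodule.smul_mem _ _ (W.divMode_mem_modeSpan (W.divMode_mem_posSpan ha hb p.1) _)))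

lemma lie_mem_modeSpan {A B : Submodule ℂ V} {f g : Module.End ℂ V} (hf : f ∈ W.modeSpan A)
    (hg : g ∈ W.modeSpan B) : ⁅f, g⁆ ∈ W.modeSpan (W.posSpan A B) := by
  let bracket : Module.End ℂ V →ₗ[ℂ] Module.End ℂ V →ₗ[ℂ] Module.End ℂ V :=
    LieModule.toEnd ℂ (Module.End ℂ V) (Module.End ℂ V)
  have hle : Submodule.map₂ bracket (W.modeSpan A) (W.modeSpan B) ≤
      W.modeSpan (W.posSpan A B) := by
    simp only [modeSpan.eq_def W A, modeSpan.eq_def W B, Submodule.map₂_iSup_left,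
      Submodule.map₂_iSup_right, iSup_le_iff, Submodule.map₂_le]
    rintro k m _ ⟨a, ha, rfl⟩ _ ⟨b, hb, rfl⟩
    exact W.lie_divMode_mem_modeSpan ha hb m k
  exact Submodule.map₂_le.1 hle f hf g hg

variable {W} {N : Submodule ℂ V}

/-- The Lie algebra of operators on `V` spanned by the modes `a_(m)` with `a ∈ N`, `m ≥ 0`. -/
noncomputable def IsConfSubalgebra.modeLie (hN : W.IsConfSubalgebra N) :
    LieSubalgebra ℂ (Module.End ℂ V) :=
  { W.modeSpan N with
    lie_mem' := fun hf hg => W.modeSpan_mono hN.posSpan_le (W.lie_mem_modeSpan hf hg) }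

lemma IsConfSubalgebra.lowerCentralSeries_modeLie_le (hN : W.IsConfSubalgebra N) (i : ℕ) :
    ∀ x ∈ LieModule.lowerCentralSeries ℂ hN.modeLie hN.modeLie i,
      (x : Module.End ℂ V) ∈ W.modeSpan (W.lcsOf N i) := by
  induction i with
  | zero => exact fun x _ => x.2
  | succ i ih =>
    suffices hle : (LieModule.lowerCentralSeries ℂ hN.modeLie hN.modeLie (i + 1)).toSubmodule ≤
        (W.modeSpan (W.lcsOf N (i + 1))).comap hN.modeLie.toSubmodule.subtype from
      fun x hx => hle hx
    rw [LieModule.lowerCentralSeries_succ, LieSubmodule.lieIdeal_oper_eq_linear_span',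
      Submodule.span_le]
    rintro _ ⟨y, -, z, hz, rfl⟩
    exact W.lie_mem_modeSpan y.2 (ih z hz)

lemma IsConfSubalgebra.isNilpotent_modeLie (hN : W.IsConfSubalgebra N)
    (hnilp : ∃ k, W.lcsOf N k = ⊥) : LieRing.IsNilpotent hN.modeLie := by
  obtain ⟨k, hk⟩ := hnilp
  refine LieModule.IsNilpotent.mk (R := ℂ) _ (k := k) ((LieSubmodule.eq_bot_iff _).2 fun x hx => ?_)
  have hx0 := hN.lowerCentralSeries_modeLie_le k x hx
  rw [hk, modeSpan_bot, Submodule.mem_bot] at hx0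
  exact Subtype.ext hx0

/-- A subspace invariant under the modes of `N`, as a module over the Lie algebra they span. -/
def IsConfSubalgebra.modeLieSubmodule (hN : W.IsConfSubalgebra N) {F : Submodule ℂ V}
    (hF : W.posSpan N F ≤ F) : LieSubmodule ℂ hN.modeLie V :=
  { F with
    lie_mem := fun {x v} hv => by
      have hle : W.modeSpan N ≤ F.compatibleMaps F :=
        W.modeSpan_le.2 fun m a ha w hw => W.posSpan_le.1 hF a ha w hw m
      exact hle x.2 hv }

lemma IsConfSubalgebra.le_iSup_jointGenEigenspace (hN : W.IsConfSubalgebra N)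
    (hnilp : ∃ k, W.lcsOf N k = ⊥) {F : Submodule ℂ V} (hfg : F.FG) (hF : W.posSpan N F ≤ F)
    {s : V} (hs : s ∈ N) :
    F ≤ ⨆ χ, jointGenEigenspace (fun m => W.divMode m s) χ := by
  have := hN.isNilpotent_modeLie hnilp
  let M := hN.modeLieSubmodule hF
  have : FiniteDimensional ℂ M := (Submodule.fg_iff_finiteDimensional F).1 hfg
  let t : ℕ → hN.modeLie := fun m => ⟨W.divMode m s, W.divMode_mem_modeSpan hs m⟩
  calc F = (⊤ : Submodule ℂ M).map M.toSubmodule.subtype := by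
        rw [Submodule.map_top, Submodule.range_subtype]; rfl
    _ = ⨆ χ, (jointGenEigenspace (fun m => toEnd ℂ hN.modeLie M (t m)) χ).map
          M.toSubmodule.subtype := by
        rw [← iSup_jointGenEigenspace_toEnd_eq_top t, Submodule.map_iSup]
    _ ≤ ⨆ χ, jointGenEigenspace (fun m => W.divMode m s) χ :=
        iSup_mono fun χ => map_jointGenEigenspace_le fun _ _ => rfl

lemma IsConfSubalgebra.iSup_jointGenEigenspace_eq_top
    [IsNoetherian (Polynomial ℂ) (Module.AEval' W.D)] (hN : W.IsConfSubalgebra N)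
    (hnilp : ∃ k, W.lcsOf N k = ⊥) {s : V} (hs : s ∈ N) :
    ⨆ χ, jointGenEigenspace (fun m => W.divMode m s) χ = ⊤ := by
  rw [eq_top_iff, ← W.locFin_eq_top hN hnilp]
  exact iSup_le fun F => hN.le_iSup_jointGenEigenspace hnilp F.2.1 F.2.2 hs

end VertexAlgebra

section ExponentialSeries

open PowerSeries
open Finset.HasAntidiagonal (antidiagonal mem_antidiagonal)

lemma evalNegHom_map_C {R : Type*} [CommRing R] (θ : PowerSeries R) :
    evalNegHom (map Polynomial.C θ) = map Polynomial.C (evalNegHom θ) := by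
  ext n
  simp [evalNegHom]

variable {K : Type*} [Field K] [CharZero K]

/-- The power series `exp (c λ X)` in the variable `λ`, with coefficients in `K[X]`. -/
noncomputable def expMulX (c : K) : PowerSeries (Polynomial K) :=
  rescale (Polynomial.C c * Polynomial.X) (exp (Polynomial K))

lemma coeff_expMulX (c : K) (m : ℕ) :
    coeff m (expMulX c) = Polynomial.monomial m (c ^ m / m.factorial) := by
  rw [expMulX, coeff_rescale, coeff_exp, mul_pow, ← Polynomial.C_mul_X_pow_eq_monomial,
    IsScalarTower.algebraMap_apply ℚ K (Polynomial K), Polynomial.algebraMap_eq,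
    div_eq_mul_inv (c ^ m), Polynomial.C_mul, Polynomial.C_pow]
  simp only [one_div, map_inv₀, map_natCast]
  ring

lemma expMulX_mul_expMulX_neg (c : K) : expMulX c * expMulX (-c) = 1 := by
  rw [expMulX, expMulX, exp_mul_exp_eq_exp_add, ← add_mul, ← Polynomial.C_add]
  simp

lemma evalNegHom_expMulX (c : K) : evalNegHom (expMulX c) = expMulX (-c) := by
  rw [expMulX, evalNegHom, rescale_rescale, expMulX, Polynomial.C_neg, mul_neg_one, neg_mul]

lemma coeff_coeff_map_C_mul_expMulX (θ : PowerSeries K) (c : K) (a i : ℕ) :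
    (coeff (a + i) (map Polynomial.C θ * expMulX c)).coeff i =
      coeff a θ * (c ^ i / i.factorial) := by
  simp only [coeff_mul, coeff_expMulX, coeff_map, Polynomial.finsetSum_coeff,
    Polynomial.coeff_C_mul, Polynomial.coeff_monomial, mul_ite, mul_zero]
  rw [Finset.sum_eq_single (a, i)]
  · simp
  · rintro ⟨b, j⟩ hb hne
    rw [mem_antidiagonal] at hb
    refine if_neg fun hji => hne ?_
    ext <;> grind
  · simp

lemma eq_zero_of_coeff_add_expMulX_eq_zero {A B B' : PowerSeries K} {d : ℕ}
    (h : ∀ n > d, coeff n (map Polynomial.C A + map Polynomial.C B * expMulX 1 +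
      map Polynomial.C B' * expMulX (-1)) = 0) : B = 0 := by
  have hparity (a i : ℕ) (hi : d < i) : coeff a B + (-1) ^ i * coeff a B' = 0 := by
    have hcoeff := congrArg (Polynomial.coeff · i) (h (a + i) (by lia))
    simp only [map_add, Polynomial.coeff_add, coeff_coeff_map_C_mul_expMulX, coeff_map,
      Polynomial.coeff_C_of_ne_zero (show i ≠ 0 by lia), Polynomial.coeff_zero, one_pow] at hcoeff
    have hi0 : (i.factorial : K) ≠ 0 := by exact_mod_cast i.factorial_ne_zero
    field_simp at hcoeff
    linear_combination hcoeff
  ext a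
  rw [map_zero]
  linear_combination (hparity a (d + 1) (by lia) + hparity a (d + 2) (by lia)) / 2

/-- The series `φ(λ) + ψ(λ) exp (λ X)`. It describes the action of `[s_λ ·]` on the products
`a_(k) b` of eigenvectors `a`, `b` of weights `ψ`, `φ`, with `X` acting as the shift `k ↦ k + 1`. -/
noncomputable def prodWeight (ψ φ : PowerSeries K) : PowerSeries (Polynomial K) :=
  map Polynomial.C φ + map Polynomial.C ψ * expMulX 1

lemma coeff_prodWeight (ψ φ : PowerSeries K) (m : ℕ) :
    coeff m (prodWeight ψ φ) = Polynomial.C (coeff m φ) + ∑ p ∈ antidiagonal m,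
      Polynomial.monomial p.2 (coeff p.1 ψ * (p.2.factorial : K)⁻¹) := by
  rw [prodWeight, map_add, coeff_mul, coeff_map]
  simp only [coeff_map, coeff_expMulX, Polynomial.C_mul_monomial, one_pow, one_div]

lemma eq_zero_or_eq_zero_of_coeff_prodWeight_mul_evalNegHom_eq_zero {ψ φ : PowerSeries K} {d : ℕ}
    (h : ∀ n > d, coeff n (prodWeight ψ φ * evalNegHom (prodWeight ψ φ)) = 0) :
    ψ = 0 ∨ φ = 0 := by
  have hexpand : prodWeight ψ φ * evalNegHom (prodWeight ψ φ) =
      map Polynomial.C (φ * evalNegHom φ + ψ * evalNegHom ψ) +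
        map Polynomial.C (ψ * evalNegHom φ) * expMulX 1 +
        map Polynomial.C (φ * evalNegHom ψ) * expMulX (-1) := by
    simp only [prodWeight, map_add, map_mul, evalNegHom_map_C, evalNegHom_expMulX]
    linear_combination (map Polynomial.C ψ * map Polynomial.C (evalNegHom ψ)) *
      expMulX_mul_expMulX_neg (1 : K)
  rw [hexpand] at h
  refine (mul_eq_zero.1 (eq_zero_of_coeff_add_expMulX_eq_zero h)).imp_right fun hφ => ?_
  exact (map_eq_zero_iff _ (rescale_injective (neg_ne_zero.2 one_ne_zero))).1 hφ

end ExponentialSeries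

section Shift

open PowerSeries (coeff)
open Polynomial (aeval)

variable (R M : Type*) [CommRing R] [AddCommGroup M] [Module R M]

/-- The shift `(w k)ₖ ↦ (w (k + 1))ₖ` of two-sided sequences. -/
def seqShift : Module.End R (ℤ → M) :=
  LinearMap.funLeft R M (· + 1)

variable {R M}

lemma seqShift_pow_apply (i : ℕ) (w : ℤ → M) (k : ℤ) : (seqShift R M ^ i) w k = w (k + i) := by
  induction i generalizing k with
  | zero => simp
  | succ i ih =>
    rw [pow_succ', Module.End.mul_apply, seqShift, LinearMap.funLeft_apply, ← seqShift, ih]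
    congr 1
    push_cast
    ring

lemma aeval_seqShift_apply (g : Polynomial R) (w : ℤ → M) (k : ℤ) :
    aeval (seqShift R M) g w k = g.sum fun i c => c • w (k + i) := by
  simp only [Polynomial.aeval_eq_sum_range, Polynomial.sum_over_range, zero_smul, implies_true,
    LinearMap.sum_apply, Finset.sum_apply, LinearMap.smul_apply, Pi.smul_apply, seqShift_pow_apply]

lemma map_aeval_seqShift_apply (f : Module.End R M) (g : Polynomial R) (w : ℤ → M) (k : ℤ) :
    f (aeval (seqShift R M) g w k) = aeval (seqShift R M) g (fun k => f (w k)) k := by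
  simp only [aeval_seqShift_apply, Polynomial.sum_def, map_sum, map_smul]

lemma coeff_mul_apply_eq_aeval_seqShift {F G : PowerSeries (Module.End R M)}
    {p q : PowerSeries (Polynomial R)} {w : ℤ → M}
    (hF : ∀ m k, coeff m F (w k) = aeval (seqShift R M) (coeff m p) w k)
    (hG : ∀ m k, coeff m G (w k) = aeval (seqShift R M) (coeff m q) w k) (m : ℕ) (k : ℤ) :
    coeff m (F * G) (w k) = aeval (seqShift R M) (coeff m (p * q)) w k := by
  simp only [PowerSeries.coeff_mul, map_sum, LinearMap.sum_apply, Finset.sum_apply]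
  refine Finset.sum_congr rfl fun x _ => ?_
  rw [Module.End.mul_apply, hG, map_aeval_seqShift_apply, mul_comm (coeff x.1 p), map_mul,
    Module.End.mul_apply]
  simp only [hF]

lemma eq_zero_of_aeval_seqShift_apply_eq_zero [IsDomain R] [Module.IsTorsionFree R M] {w : ℤ → M}
    (hw : w ≠ 0) (hbdd : ∃ K : ℤ, ∀ k ≥ K, w k = 0) {g : Polynomial R}
    (hg : aeval (seqShift R M) g w = 0) : g = 0 := by
  obtain ⟨K, hK⟩ := hbdd
  obtain ⟨top, htop, hmax⟩ := Int.exists_greatest_of_bdd (P := fun k => w k ≠ 0)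
    ⟨K, fun k hk => not_lt.1 fun hlt => hk (hK k hlt.le)⟩ (Function.ne_iff.1 hw)
  by_contra hg0
  have heval := congrFun hg (top - g.natTrailingDegree)
  rw [aeval_seqShift_apply, Polynomial.sum_def, Finset.sum_eq_single g.natTrailingDegree,
    sub_add_cancel, Pi.zero_apply, smul_eq_zero] at heval
  · exact heval.elim (mt Polynomial.trailingCoeff_eq_zero.1 hg0) htop
  · intro i hi hne
    have hlt := (Polynomial.natTrailingDegree_le_of_mem_supp i hi).lt_of_ne' hne
    rw [not_not.1 (mt (hmax _) (by lia)), smul_zero]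
  · intro hnot
    rw [Polynomial.notMem_support_iff.1 hnot, zero_smul]

end Shift

namespace VertexAlgebra

open Finset.HasAntidiagonal (antidiagonal mem_antidiagonal)
open Module.End (invtSubmodule)
open PowerSeries (coeff)

variable {V : Type*} [AddCommGroup V] [Module ℂ V] (W : VertexAlgebra V)

/-- The adjoint action `[s_(cλ) ·]`, as a power series in `λ` with coefficients in `End V`. -/
noncomputable def adSeries (s : V) (c : ℂ) : PowerSeries (Module.End ℂ V) :=
  PowerSeries.mk fun m => c ^ m • W.divMode m s

lemma coeff_adSeries (s : V) (c : ℂ) (m : ℕ) : coeff m (W.adSeries s c) = c ^ m • W.divMode m s :=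
  PowerSeries.coeff_mk _ _

lemma adSeries_mul_C_D (s : V) (c : ℂ) :
    W.adSeries s c * PowerSeries.C W.D =
      PowerSeries.C W.D * W.adSeries s c + c • (PowerSeries.X * W.adSeries s c) := by
  ext m v
  cases m with
  | zero => simp [adSeries, divMode_zero_D]
  | succ m =>
    simp [coeff_adSeries, divMode_succ_D, PowerSeries.coeff_succ_X_mul, pow_succ', mul_smul]

lemma adSeries_mul_adSeries_neg_commute_C_D (s : V) (c : ℂ) :
    Commute (W.adSeries s c * W.adSeries s (-c)) (PowerSeries.C W.D) := by
  have hX : W.adSeries s c * (PowerSeries.X * W.adSeries s (-c)) =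
      PowerSeries.X * W.adSeries s c * W.adSeries s (-c) := by
    rw [← mul_assoc, (PowerSeries.commute_X (W.adSeries s c)).eq]
  rw [Commute, SemiconjBy, mul_assoc, adSeries_mul_C_D, mul_add, ← mul_assoc, adSeries_mul_C_D,
    mul_smul_comm, hX, add_mul, smul_mul_assoc, neg_smul, add_neg_cancel_right, mul_assoc]

lemma ker_coeff_adSeries_mul_mem_invtSubmodule (s : V) (n : ℕ) :
    LinearMap.ker (coeff n (W.adSeries s 1 * W.adSeries s (-1))) ∈ invtSubmodule W.D := by
  intro v hv
  have hcomm := congrArg (coeff n) (W.adSeries_mul_adSeries_neg_commute_C_D s 1).eq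
  rw [PowerSeries.coeff_mul_C, PowerSeries.coeff_C_mul] at hcomm
  rw [Submodule.mem_comap, LinearMap.mem_ker, ← Module.End.mul_apply, hcomm, Module.End.mul_apply,
    LinearMap.mem_ker.1 hv, map_zero]

lemma exists_forall_coeff_adSeries_mul_apply_eq_zero (s : V) (b c : ℂ) (v : V) :
    ∃ d, ∀ n > d, coeff n (W.adSeries s b * W.adSeries s c) v = 0 := by
  obtain ⟨k₀, hk₀⟩ := W.exists_forall_divMode_eq_zero s v
  choose bound hbound using fun k => W.exists_forall_divMode_eq_zero s (W.divMode k s v)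
  refine ⟨k₀ + (Finset.range k₀).sup bound, fun n hn => ?_⟩
  rw [PowerSeries.coeff_mul, LinearMap.sum_apply]
  refine Finset.sum_eq_zero fun ⟨m, k⟩ hmk => ?_
  rw [mem_antidiagonal] at hmk
  simp only [coeff_adSeries, Module.End.mul_apply, LinearMap.smul_apply, map_smul]
  rcases le_or_gt k₀ k with hk | hk
  · rw [hk₀ k hk, map_zero, smul_zero, smul_zero]
  · have hle : bound k ≤ (Finset.range k₀).sup bound := Finset.le_sup (Finset.mem_range.2 hk)
    rw [hbound k m (by lia), smul_zero, smul_zero]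

section Noetherian

variable [IsNoetherian (Polynomial ℂ) (Module.AEval' W.D)]

lemma exists_forall_coeff_adSeries_mul_eq_zero (s : V) :
    ∃ d, ∀ n > d, coeff n (W.adSeries s 1 * W.adSeries s (-1)) = 0 := by
  obtain ⟨G, -, hG⟩ := exists_finset_forall_le_of_mem_invtSubmodule W.D
    (Module.End.invtSubmodule.top_mem W.D)
  choose d hd using W.exists_forall_coeff_adSeries_mul_apply_eq_zero s 1 (-1)
  refine ⟨G.sup d, fun n hn => LinearMap.ker_eq_top.1 (top_le_iff.1 ?_)⟩
  exact hG _ (W.ker_coeff_adSeries_mul_mem_invtSubmodule s n)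
    fun g hg => hd g n ((Finset.le_sup hg).trans_lt hn)

lemma eq_zero_of_divMode_apply_eq_prodWeight {s : V} {ψ φ : ℕ → ℂ} (hψ : ψ ≠ 0) (hφ : φ ≠ 0)
    {w : ℤ → V} (hbdd : ∃ K : ℤ, ∀ k ≥ K, w k = 0)
    (hw : ∀ (m : ℕ) (k : ℤ), W.divMode m s (w k) = φ m • w k +
      ∑ p ∈ antidiagonal m, (p.2.factorial : ℂ)⁻¹ • ψ p.1 • w (k + p.2)) : w = 0 := by
  by_contra hw0
  let H := prodWeight (PowerSeries.mk ψ) (PowerSeries.mk φ)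
  have hH (m : ℕ) (k : ℤ) :
      W.divMode m s (w k) = Polynomial.aeval (seqShift ℂ V) (coeff m H) w k := by
    simp only [H, hw, coeff_prodWeight, PowerSeries.coeff_mk, map_add, map_sum, LinearMap.add_apply,
      LinearMap.sum_apply, Pi.add_apply, Finset.sum_apply, ← Polynomial.monomial_zero_left,
      aeval_seqShift_apply, Polynomial.sum_monomial_index, zero_smul, Nat.cast_zero, add_zero,
      smul_smul, mul_comm]
  have hpos (m : ℕ) (k : ℤ) : coeff m (W.adSeries s 1) (w k) =
      Polynomial.aeval (seqShift ℂ V) (coeff m H) w k := by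
    rw [coeff_adSeries, one_pow, one_smul, hH]
  have hneg (m : ℕ) (k : ℤ) : coeff m (W.adSeries s (-1)) (w k) =
      Polynomial.aeval (seqShift ℂ V) (coeff m (PowerSeries.evalNegHom H)) w k := by
    have hcoeff : coeff m (PowerSeries.evalNegHom H) = (-1 : ℂ) ^ m • coeff m H := by
      simp [PowerSeries.evalNegHom, PowerSeries.coeff_rescale, Polynomial.smul_eq_C_mul]
    rw [coeff_adSeries, LinearMap.smul_apply, hH, hcoeff, map_smul, LinearMap.smul_apply,
      Pi.smul_apply]
  obtain ⟨d, hd⟩ := W.exists_forall_coeff_adSeries_mul_eq_zero s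
  have hvanish : ∀ n > d, coeff n (H * PowerSeries.evalNegHom H) = 0 := fun n hn => by
    refine eq_zero_of_aeval_seqShift_apply_eq_zero hw0 hbdd (funext fun k => ?_)
    rw [← coeff_mul_apply_eq_aeval_seqShift hpos hneg, hd n hn, LinearMap.zero_apply, Pi.zero_apply]
  have hmk {θ : ℕ → ℂ} (hθ : PowerSeries.mk θ = 0) : θ = 0 :=
    funext fun m => by rw [← PowerSeries.coeff_mk m θ, hθ, map_zero, Pi.zero_apply]
  exact (eq_zero_or_eq_zero_of_coeff_prodWeight_mul_evalNegHom_eq_zero hvanish).elim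
    (fun h => hψ (hmk h)) fun h => hφ (hmk h)

lemma P_eq_zero_of_mem_jointEigenChain {s : V} {ψ φ : ℕ → ℂ} (hψ : ψ ≠ 0) (hφ : φ ≠ 0) {i j : ℕ}
    {a b : V} (ha : a ∈ jointEigenChain (W.divMode · s) ψ i)
    (hb : b ∈ jointEigenChain (W.divMode · s) φ j) (k : ℤ) : W.P k a b = 0 := by
  induction i generalizing a b j k with
  | zero => rw [(Submodule.mem_bot ℂ).1 ha, map_zero, LinearMap.zero_apply]
  | succ i ihi =>
    induction j generalizing b k with
    | zero => rw [(Submodule.mem_bot ℂ).1 hb, map_zero]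
    | succ j ihj =>
      have hright (m : ℕ) (k : ℤ) : W.P k a (W.divMode m s b) = φ m • W.P k a b := by
        rw [← sub_eq_zero, ← map_smul, ← map_sub]
        exact ihj (mem_jointEigenChain_succ.1 hb m) k
      have hleft (m : ℕ) (k : ℤ) : W.P k (W.divMode m s a) b = ψ m • W.P k a b := by
        rw [← sub_eq_zero, ← LinearMap.smul_apply, ← map_smul, ← LinearMap.sub_apply, ← map_sub]
        exact ihi (mem_jointEigenChain_succ.1 ha m) hb k
      obtain ⟨K, hK⟩ := W.field_ax a b
      have hbdd : ∀ k ≥ (K : ℤ), W.P k a b = 0 := fun k hk => by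
        lift k to ℕ using K.cast_nonneg.trans hk
        exact hK k (by exact_mod_cast hk)
      refine congrFun (W.eq_zero_of_divMode_apply_eq_prodWeight (s := s) (w := (W.P · a b))
        hψ hφ ⟨K, hbdd⟩ fun m k => ?_) k
      simp only [divMode_P, hright, hleft]

lemma P_eq_zero_of_mem_jointGenEigenspace {s : V} {ψ φ : ℕ → ℂ} (hψ : ψ ≠ 0) (hφ : φ ≠ 0)
    {a b : V} (ha : a ∈ jointGenEigenspace (W.divMode · s) ψ)
    (hb : b ∈ jointGenEigenspace (W.divMode · s) φ) (k : ℤ) : W.P k a b = 0 := by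
  obtain ⟨i, hi⟩ := mem_jointGenEigenspace.1 ha
  obtain ⟨j, hj⟩ := mem_jointGenEigenspace.1 hb
  exact W.P_eq_zero_of_mem_jointEigenChain hψ hφ hi hj k

end Noetherian

lemma P_mem_jointEigenChain {s : V} {φ : ℕ → ℂ} {i j : ℕ} {a b : V}
    (ha : a ∈ jointEigenChain (W.divMode · s) 0 i)
    (hb : b ∈ jointEigenChain (W.divMode · s) φ j) (k : ℤ) :
    W.P k a b ∈ jointEigenChain (W.divMode · s) φ (i + j) := by
  induction i generalizing a b j k with
  | zero =>
    rw [(Submodule.mem_bot ℂ).1 ha, map_zero]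
    exact Submodule.zero_mem _
  | succ i ihi =>
    induction j generalizing b k with
    | zero =>
      rw [(Submodule.mem_bot ℂ).1 hb, map_zero]
      exact Submodule.zero_mem _
    | succ j ihj =>
      refine (mem_jointEigenChain_succ (i := i + 1 + j)).2 fun m => ?_
      rw [divMode_P, add_sub_right_comm, ← map_smul, ← map_sub]
      refine Submodule.add_mem _ (ihj (mem_jointEigenChain_succ.1 hb m) k)
        (Submodule.sum_mem _ fun p _ => Submodule.smul_mem _ _ ?_)
      have hap : W.divMode p.1 s a ∈ jointEigenChain (W.divMode · s) 0 i := by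
        simpa using mem_jointEigenChain_succ.1 ha p.1
      exact jointEigenChain_mono (by lia) (ihi hap hb _)

lemma P_mem_jointGenEigenspace {s : V} {φ : ℕ → ℂ} {a b : V}
    (ha : a ∈ jointGenEigenspace (W.divMode · s) 0)
    (hb : b ∈ jointGenEigenspace (W.divMode · s) φ) (k : ℤ) :
    W.P k a b ∈ jointGenEigenspace (W.divMode · s) φ := by
  obtain ⟨i, hi⟩ := mem_jointGenEigenspace.1 ha
  obtain ⟨j, hj⟩ := mem_jointGenEigenspace.1 hb
  exact mem_jointGenEigenspace.2 ⟨i + j, W.P_mem_jointEigenChain hi hj k⟩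

lemma D_mem_jointEigenChain {s : V} {φ : ℕ → ℂ} {i : ℕ} {v : V}
    (hv : v ∈ jointEigenChain (W.divMode · s) φ i) :
    W.D v ∈ jointEigenChain (W.divMode · s) φ (2 * i) := by
  induction i generalizing v with
  | zero =>
    rw [(Submodule.mem_bot ℂ).1 hv, map_zero]
    exact Submodule.zero_mem _
  | succ i ih =>
    have hD (m : ℕ) : W.D (W.divMode m s v - φ m • v) ∈
        jointEigenChain (W.divMode · s) φ (2 * i + 1) :=
      jointEigenChain_mono (Nat.le_succ _) (ih (mem_jointEigenChain_succ.1 hv m))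
    refine mem_jointEigenChain_succ.2 fun m => ?_
    cases m with
    | zero =>
      rw [divMode_zero_D, ← map_smul, ← map_sub]
      exact hD 0
    | succ m =>
      rw [divMode_succ_D, add_sub_right_comm, ← map_smul, ← map_sub]
      exact Submodule.add_mem _ (hD (m + 1))
        (jointEigenChain_mono (by lia) (apply_mem_jointEigenChain hv m))

lemma jointGenEigenspace_mem_invtSubmodule (s : V) (φ : ℕ → ℂ) :
    jointGenEigenspace (W.divMode · s) φ ∈ invtSubmodule W.D := fun v hv => by
  obtain ⟨i, hi⟩ := mem_jointGenEigenspace.1 hv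
  exact mem_jointGenEigenspace.2 ⟨2 * i, W.D_mem_jointEigenChain hi⟩

/-- The sum of the generalized weight spaces of `s` for non-zero weights. -/
noncomputable def nonzeroWeightSum (s : V) : Submodule ℂ V :=
  ⨆ φ : {φ : ℕ → ℂ // φ ≠ 0}, jointGenEigenspace (W.divMode · s) φ

lemma nonzeroWeightSum_mem_invtSubmodule (s : V) :
    W.nonzeroWeightSum s ∈ invtSubmodule W.D := by
  rw [Module.End.mem_invtSubmodule, nonzeroWeightSum, iSup_le_iff]
  exact fun φ v hv => Submodule.mem_iSup_of_mem φ (W.jointGenEigenspace_mem_invtSubmodule s φ hv)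

section Noetherian

variable [IsNoetherian (Polynomial ℂ) (Module.AEval' W.D)] {s : V}

lemma P_eq_zero_of_mem_nonzeroWeightSum {a b : V} (ha : a ∈ W.nonzeroWeightSum s)
    (hb : b ∈ W.nonzeroWeightSum s) (n : ℤ) : W.P n a b = 0 := by
  have hle : Submodule.map₂ (W.P n) (W.nonzeroWeightSum s) (W.nonzeroWeightSum s) ≤ ⊥ := by
    simp only [nonzeroWeightSum, Submodule.map₂_iSup_left, Submodule.map₂_iSup_right, iSup_le_iff,
      Submodule.map₂_le]
    exact fun φ ψ a ha b hb => W.P_eq_zero_of_mem_jointGenEigenspace ψ.2 φ.2 ha hb n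
  exact (Submodule.mem_bot ℂ).1 (Submodule.map₂_le.1 hle a ha b hb)

lemma P_mem_nonzeroWeightSum (hdec : ⨆ χ, jointGenEigenspace (W.divMode · s) χ = ⊤) (a : V)
    {b : V} (hb : b ∈ W.nonzeroWeightSum s) (n : ℤ) : W.P n a b ∈ W.nonzeroWeightSum s := by
  have hle : Submodule.map₂ (W.P n) ⊤ (W.nonzeroWeightSum s) ≤ W.nonzeroWeightSum s := by
    rw [← hdec, nonzeroWeightSum]
    simp only [Submodule.map₂_iSup_left, Submodule.map₂_iSup_right, iSup_le_iff, Submodule.map₂_le]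
    intro φ ψ a ha b hb
    rcases eq_or_ne ψ 0 with rfl | hψ
    · exact Submodule.mem_iSup_of_mem φ (W.P_mem_jointGenEigenspace ha hb n)
    · rw [W.P_eq_zero_of_mem_jointGenEigenspace hψ φ.2 ha hb n]
      exact Submodule.zero_mem _
  exact Submodule.map₂_le.1 hle a Submodule.mem_top b hb

lemma isAbelianIdeal_nonzeroWeightSum (hdec : ⨆ χ, jointGenEigenspace (W.divMode · s) χ = ⊤) :
    W.IsAbelianIdeal (W.nonzeroWeightSum s) :=
  ⟨⟨W.nonzeroWeightSum_mem_invtSubmodule s, fun a _ hb => W.P_mem_nonzeroWeightSum hdec a hb⟩,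
    fun _ ha _ hb => W.P_eq_zero_of_mem_nonzeroWeightSum ha hb⟩

lemma IsReduced.jointGenEigenspace_zero_eq_top {W : VertexAlgebra V} (hred : W.IsReduced)
    [IsNoetherian (Polynomial ℂ) (Module.AEval' W.D)]
    (hdec : ⨆ χ, jointGenEigenspace (W.divMode · s) χ = ⊤) :
    jointGenEigenspace (W.divMode · s) 0 = ⊤ := by
  have hbot := hred _ (W.isAbelianIdeal_nonzeroWeightSum hdec)
  rw [nonzeroWeightSum, iSup_subtype] at hbot
  rw [← hdec, iSup_split_single _ 0, hbot, sup_bot_eq]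

end Noetherian

end VertexAlgebra

lemma foldr_eq_zero_of_mem_filtration {ι R M : Type*} [Semiring R] [AddCommMonoid M] [Module R M]
    {F : ℕ → Submodule R M} (hF : Monotone F) (hF0 : F 0 = ⊥) {g : ι → M → M}
    (hg : ∀ h i, ∀ v ∈ F (i + 1), g h v ∈ F i) {i : ℕ} {v : M} (hv : v ∈ F i) {hs : List ι}
    (hlen : i ≤ hs.length) : hs.foldr g v = 0 := by
  have hmem : hs.foldr g v ∈ F (i - hs.length) := by
    clear hlen
    induction hs with
    | nil => exact hv
    | cons h hs ih =>
      have hle : i - hs.length ≤ i - (hs.length + 1) + 1 := by lia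
      exact hg h _ _ (hF hle ih)
  rwa [Nat.sub_eq_zero_of_le hlen, hF0, Submodule.mem_bot] at hmem

lemma VertexAlgebra.P_natCast_mem_jointEigenChain_zero {V : Type*} [AddCommGroup V] [Module ℂ V]
    (W : VertexAlgebra V) {s v : V} {i : ℕ} (hv : v ∈ jointEigenChain (W.divMode · s) 0 (i + 1))
    (m : ℕ) : W.P m s v ∈ jointEigenChain (W.divMode · s) 0 i := by
  rw [P_natCast]
  refine Submodule.smul_mem _ _ ?_
  simpa using mem_jointEigenChain_succ.1 hv m

open VertexAlgebra in
/-- in a finite reduced vertex algebra, every element of a nilpotent Lie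
conformal subalgebra `N` acts nilpotently in the adjoint conformal action: all
sufficiently long iterated brackets `[s_{λ₁}[s_{λ₂}[⋯[s_{λₙ} v]⋯]]]` vanish
(coefficientwise, for every choice of coefficient indices). -/
theorem nilpotent_subalgebra_acts_nilpotently {V : Type*} [AddCommGroup V] [Module ℂ V]
    (W : VertexAlgebra V) (hfin : W.IsFinite) (hred : W.IsReduced)
    (N : Submodule ℂ V) (hN : W.IsConfSubalgebra N)
    (hnilp : ∃ k : ℕ, W.lcsOf N k = ⊥) :
    ∀ s ∈ N, ∀ v : V, ∃ n : ℕ, ∀ ks : List ℕ, n ≤ ks.length →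
      ks.foldr (fun k w => W.P k s w) v = 0 := by
  intro s hs v
  have := hfin.finite_aeval
  have hweights := hN.iSup_jointGenEigenspace_eq_top hnilp hs
  have hzero := hred.jointGenEigenspace_zero_eq_top hweights
  obtain ⟨n, hv⟩ := mem_jointGenEigenspace.1 (hzero ▸ Submodule.mem_top : v ∈ _)
  refine ⟨n, fun ks hlen => ?_⟩
  -- The statement elaborates `k` as an integer, so that `ks` is coerced through the list monad.
  have hcoe : (do let k ← ks; pure (k : ℤ)) = ks.map ((↑) : ℕ → ℤ) := bind_pure_comp _ _
  rw [hcoe, List.foldr_map]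
  exact foldr_eq_zero_of_mem_filtration jointEigenChain_mono rfl
    (fun m i w hw => W.P_natCast_mem_jointEigenChain_zero hw m) hv hlen
end
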